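/- arXiv:1504.03227 — 2 statements merged into one kernel-verified Lean document; each statement's English description precedes it below -/
import Mathlib

section
/- Let n be an even integer and p > n+2 a prime. Then the sum of 1/(l_1⋯l_n) over all n-tuples of positive integers with l_1+⋯+l_n = 3p and each l_i coprime to p is congruent modulo p to (n!/6)·Σ_{a odd, 3 ≤ a ≤ n-3} (2n - a + 3)·B_{p-a}·B_{p-n+a}/(a(n-a)). -/
/-- `x ≡ y (mod p^r)` as p-integral rationals. -/
def ratCong (p r : ℕ) (x y : ℚ) : Prop :=
  ∃ z : ℚ, x - y = (p : ℚ) ^ r * z ∧ ¬ (p ∣ z.den)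

/-- Sum of `1/(l₁⋯lₙ)` over positive `n`-tuples summing to `N` with each `lᵢ` coprime to `p`. -/
def hsum (p n N : ℕ) : ℚ :=
  ∑ l ∈ (Fintype.piFinset fun _ : Fin n => Finset.Icc 1 N) |>.filter
      (fun l => ∑ i, l i = N ∧ ∀ i, ¬ p ∣ l i),
    ∏ i, (1 : ℚ) / l i

section PartA
open PowerSeries

variable (K : Type*) [Field K] [CharZero K] (p : ℕ)

/-- the series `∑_{p ∤ l} x^l / l` -/
noncomputable def fser : K⟦X⟧ := PowerSeries.mk fun l => if p ∣ l then 0 else 1 / (l : K)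

/-- coefficients of `(1-x)^(-T)` -/
noncomputable def ucoef (N : ℕ) : Polynomial K :=
  Polynomial.C (1 / (N.factorial : K)) * ∏ i ∈ Finset.range N, (Polynomial.X + Polynomial.C (i : K))

/-- coefficients of `(1-y)^(T/p)` -/
noncomputable def vcoef (j : ℕ) : Polynomial K :=
  Polynomial.C (1 / ((p : K) ^ j * (j.factorial : K))) *
    ∏ i ∈ Finset.range j, (Polynomial.C ((p : K) * (i : K)) - Polynomial.X)

noncomputable def User : (Polynomial K)⟦X⟧ := PowerSeries.mk (ucoef K)
noncomputable def Vser : (Polynomial K)⟦X⟧ :=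
  PowerSeries.mk fun N => if p ∣ N then vcoef K p (N / p) else 0

variable {K}

lemma ucoef_succ (N : ℕ) : ucoef K (N + 1) * ((N : Polynomial K) + 1) =
    (Polynomial.X + Polynomial.C (N : K)) * ucoef K N := by
  unfold ucoef
  rw [Finset.prod_range_succ, Nat.factorial_succ]
  have h1 : ((N : K) + 1) ≠ 0 := by exact_mod_cast Nat.succ_ne_zero N
  have h2 : (N.factorial : K) ≠ 0 := by exact_mod_cast Nat.factorial_ne_zero N
  have : Polynomial.C (1 / (((N + 1) * N.factorial : ℕ) : K)) * ((N : Polynomial K) + 1)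
      = Polynomial.C (1 / (N.factorial : K)) := by
    have e : ((N : Polynomial K) + 1) = Polynomial.C ((N : K) + 1) := by simp
    rw [e, ← Polynomial.C_mul]
    congr 1
    push_cast
    field_simp
  calc _ = (Polynomial.C (1 / (((N + 1) * N.factorial : ℕ) : K)) * ((N : Polynomial K) + 1)) *
        ((∏ i ∈ Finset.range N, (Polynomial.X + Polynomial.C (i : K))) *
          (Polynomial.X + Polynomial.C (N : K))) := by ring
    _ = _ := by rw [this]; ring

lemma vcoef_succ (hp : p ≠ 0) (j : ℕ) :
    vcoef K p (j + 1) * ((p : Polynomial K) * ((j : Polynomial K) + 1)) =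
    (Polynomial.C ((p : K) * (j : K)) - Polynomial.X) * vcoef K p j := by
  unfold vcoef
  rw [Finset.prod_range_succ, Nat.factorial_succ]
  have h0 : (p : K) ≠ 0 := by exact_mod_cast hp
  have h1 : ((j : K) + 1) ≠ 0 := by exact_mod_cast Nat.succ_ne_zero j
  have h2 : (j.factorial : K) ≠ 0 := by exact_mod_cast Nat.factorial_ne_zero j
  have : Polynomial.C (1 / ((p : K) ^ (j + 1) * (((j + 1) * j.factorial : ℕ) : K))) *
      ((p : Polynomial K) * ((j : Polynomial K) + 1))
      = Polynomial.C (1 / ((p : K) ^ j * (j.factorial : K))) := by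
    have e : ((p : Polynomial K) * ((j : Polynomial K) + 1)) = Polynomial.C ((p : K) * ((j : K) + 1)) := by
      simp
    rw [e, ← Polynomial.C_mul]
    congr 1
    push_cast
    field_simp
    ring
  calc _ = (Polynomial.C (1 / ((p : K) ^ (j + 1) * (((j + 1) * j.factorial : ℕ) : K))) *
      ((p : Polynomial K) * ((j : Polynomial K) + 1))) *
        ((∏ i ∈ Finset.range j, (Polynomial.C ((p : K) * (i : K)) - Polynomial.X)) *
          (Polynomial.C ((p : K) * (j : K)) - Polynomial.X)) := by ring
    _ = _ := by rw [this]; ring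

lemma User_ode : (1 - X) * derivative (Polynomial K) (User K) =
    PowerSeries.C (Polynomial.X : Polynomial K) * User K := by
  ext1 N
  rw [sub_mul, one_mul, map_sub, coeff_C_mul, coeff_derivative]
  rcases N with _ | N
  · have := ucoef_succ (K := K) 0
    simp only [User, coeff_mk, coeff_zero_X_mul]
    simpa using this
  · rw [coeff_succ_X_mul, coeff_derivative]
    have := ucoef_succ (K := K) (N + 1)
    simp only [User, coeff_mk]
    rw [this]
    push_cast
    simp only [map_add, map_one, map_natCast]
    ring

lemma Vser_ode (hp : p ≠ 0) : (1 - X ^ p) * derivative (Polynomial K) (Vser K p) =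
    - PowerSeries.C (Polynomial.X : Polynomial K) * X ^ (p - 1) * Vser K p := by
  ext1 N
  rw [sub_mul, one_mul, map_sub, neg_mul, neg_mul, map_neg, mul_assoc, coeff_C_mul,
    coeff_derivative, coeff_X_pow_mul', coeff_X_pow_mul', coeff_derivative]
  by_cases h : p ∣ N + 1
  · obtain ⟨k, hk⟩ := h
    rcases k with _ | k
    · omega
    have hN : N = p * k + (p - 1) := by rw [Nat.mul_succ] at hk; omega
    have e1 : N - (p - 1) = p * k := by omega
    have e2 : p - 1 ≤ N := by omega
    have hv := vcoef_succ (K := K) p hp k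
    have c1 : ((N : Polynomial K) + 1) = (p : Polynomial K) * ((k : Polynomial K) + 1) := by
      exact_mod_cast hk
    rw [if_pos e2, e1, c1]
    simp only [Vser, coeff_mk, hk, dvd_mul_right, if_true, Nat.mul_div_cancel_left _ (Nat.pos_of_ne_zero hp)]
    rw [hv]
    rcases k with _ | k
    · rw [if_neg (by omega)]
      simp
    · have e4 : 0 < p * (k + 1) := Nat.mul_pos (Nat.pos_of_ne_zero hp) (Nat.succ_pos k)
      have e3 : N - p + 1 = p * (k + 1) := by rw [Nat.mul_succ] at hk; omega
      have c2 : (((N - p : ℕ) : Polynomial K) + 1) = (p : Polynomial K) * ((k : Polynomial K) + 1) := by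
        exact_mod_cast e3
      rw [if_pos (by omega), c2]
      simp only [e3, dvd_mul_right, if_true, Nat.mul_div_cancel_left _ (Nat.pos_of_ne_zero hp)]
      simp
      ring
  · have h1 : coeff (N + 1) (Vser K p) = 0 := by simp [Vser, h]
    have h2 : p ≤ N → coeff (N - p + 1) (Vser K p) = 0 := by
      intro hle
      have : ¬ p ∣ N - p + 1 := by
        intro hd
        apply h
        have := (Nat.dvd_add_right (dvd_refl p)).2 hd
        rwa [show p + (N - p + 1) = N + 1 by omega] at this
      simp [Vser, this]
    have h3 : p - 1 ≤ N → coeff (N - (p - 1)) (Vser K p) = 0 := by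
      intro hle
      have : ¬ p ∣ N - (p - 1) := by
        intro hd
        apply h
        have := (Nat.dvd_add_right (dvd_refl p)).2 hd
        rwa [show p + (N - (p - 1)) = N + 1 by omega] at this
      simp [Vser, this]
    rw [h1]
    split_ifs with a b b
    · rw [h2 a, h3 b]; simp
    · rw [h2 a]; simp
    · rw [h3 b]; simp
    · simp

lemma fser_deriv (hp : p ≠ 0) : (1 - X) * (1 - X ^ p) * derivative K (fser K p) =
    (1 - X ^ p) - X ^ (p - 1) * (1 - X) := by
  have hA : (1 - X) * (PowerSeries.mk fun _ => (1 : K)) = 1 := by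
    rw [mul_comm]; exact mk_one_mul_one_sub_eq_one K
  have hB : (1 - X ^ p) * (PowerSeries.mk fun l => if p ∣ l + 1 then (1 : K) else 0) = X ^ (p - 1) := by
    ext1 N
    rw [sub_mul, one_mul, map_sub, coeff_X_pow_mul', coeff_X_pow]
    simp only [coeff_mk]
    by_cases hN : p ≤ N
    · rw [if_pos hN, if_neg (by omega : ¬ N = p - 1)]
      have : p ∣ N + 1 ↔ p ∣ N - p + 1 := by
        rw [← Nat.dvd_add_right (dvd_refl p) (c := N - p + 1), show p + (N - p + 1) = N + 1 by omega]
      simp [this]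
    · rw [if_neg hN]
      by_cases h : N = p - 1
      · rw [if_pos h, if_pos, sub_zero]
        rw [h]
        have : p - 1 + 1 = p := by omega
        rw [this]
      · rw [if_neg h, if_neg, sub_zero]
        intro hd
        have := Nat.le_of_dvd (by omega) hd
        omega
  have hf : derivative K (fser K p) = (PowerSeries.mk fun _ => (1 : K)) -
      (PowerSeries.mk fun l => if p ∣ l + 1 then (1 : K) else 0) := by
    ext1 N
    rw [coeff_derivative, map_sub]
    simp only [fser, coeff_mk]
    have h1 : ((N : K) + 1) ≠ 0 := by exact_mod_cast Nat.succ_ne_zero N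
    split_ifs
    · simp
    · push_cast; field_simp; simp
  rw [hf]
  linear_combination (1 - X ^ p) * hA - (1 - X) * hB

lemma psderiv_mul {R : Type*} [CommRing R] (a b : R⟦X⟧) :
    derivative R (a * b) = a * derivative R b + b * derivative R a := by
  rw [Derivation.leibniz, smul_eq_mul, smul_eq_mul]

lemma UV_ode (hp : p ≠ 0) : derivative (Polynomial K) (User K * Vser K p) =
    PowerSeries.C (Polynomial.X : Polynomial K) *
      (PowerSeries.map (Polynomial.C : K →+* Polynomial K) (derivative K (fser K p)) *
       (User K * Vser K p)) := by
  have hf := congrArg (PowerSeries.map (Polynomial.C : K →+* Polynomial K)) (fser_deriv (K := K) p hp)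
  simp only [map_mul, map_sub, map_one, map_pow, PowerSeries.map_X] at hf
  have hU := User_ode (K := K)
  have hV := Vser_ode (K := K) p hp
  have n1 : (1 - X : (Polynomial K)⟦X⟧) ≠ 0 := by
    intro h
    have := congrArg (coeff 0) h
    simp at this
  have n2 : (1 - X ^ p : (Polynomial K)⟦X⟧) ≠ 0 := by
    intro h
    have := congrArg (coeff 0) h
    simp [hp] at this
  apply mul_left_cancel₀ (mul_ne_zero n1 n2)
  rw [psderiv_mul]
  linear_combination (1 - X ^ p) * Vser K p * hU + (1 - X) * User K * hV
    - PowerSeries.C (Polynomial.X : Polynomial K) * User K * Vser K p * hf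

lemma UV_coeff_zero (hp : p ≠ 0) : coeff 0 (User K * Vser K p) = 1 := by
  simp [User, Vser, ucoef, vcoef]

/-- the key generating function identity -/
lemma fser_pow (hp : p ≠ 0) (n : ℕ) :
    (PowerSeries.mk fun N => (coeff N (User K * Vser K p)).coeff n) =
      PowerSeries.C (1 / (n.factorial : K)) * fser K p ^ n := by
  have key : ∀ n N, (coeff N (derivative (Polynomial K) (User K * Vser K p))).coeff (n + 1) =
      coeff N (derivative K (fser K p) * (PowerSeries.mk fun N => (coeff N (User K * Vser K p)).coeff n)) := by
    intro n N
    rw [UV_ode p hp, coeff_C_mul, Polynomial.coeff_X_mul, coeff_mul, coeff_mul, Polynomial.finsetSum_coeff]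
    refine Finset.sum_congr rfl fun x _ => ?_
    rw [coeff_map, Polynomial.coeff_C_mul, coeff_mk]
  have key0 : ∀ N, (coeff N (derivative (Polynomial K) (User K * Vser K p))).coeff 0 = 0 := by
    intro N
    rw [UV_ode p hp, coeff_C_mul, Polynomial.coeff_X_mul_zero]
  have hc : ∀ N m, (coeff N (derivative (Polynomial K) (User K * Vser K p))).coeff m =
     (coeff (N+1) (User K * Vser K p)).coeff m * (N + 1) := by
    intro N m
    rw [coeff_derivative]
    have : ((N : Polynomial K) + 1) = Polynomial.C ((N : K) + 1) := by simp
    rw [this, Polynomial.coeff_mul_C]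
  induction n with
  | zero =>
    apply derivative.ext
    · ext1 N
      rw [coeff_derivative, coeff_mk, ← hc, key0]
      simp
    · rw [← coeff_zero_eq_constantCoeff_apply, coeff_mk, UV_coeff_zero p hp]
      simp
  | succ n ih =>
    apply derivative.ext
    · ext1 N
      rw [coeff_derivative, coeff_mk, ← hc, key, ih]
      congr 1
      rw [psderiv_mul, derivative_C, derivative_pow, Nat.factorial_succ]
      have h1 : ((n : K) + 1) ≠ 0 := by exact_mod_cast Nat.succ_ne_zero n
      have h2 : (n.factorial : K) ≠ 0 := by exact_mod_cast Nat.factorial_ne_zero n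
      have e : PowerSeries.C (1 / (n.factorial : K)) =
        PowerSeries.C (1 / (((n + 1) * n.factorial : ℕ) : K)) * (((n + 1 : ℕ) : K⟦X⟧)) := by
        rw [← map_natCast (PowerSeries.C (R := K)) (n + 1), ← map_mul]
        congr 1
        push_cast
        field_simp
      rw [e]
      simp
      ring
    · rw [← coeff_zero_eq_constantCoeff_apply, coeff_mk, UV_coeff_zero p hp]
      simp [fser, Polynomial.coeff_one]

lemma hsum_eq [DecidableEq K] (n N : ℕ) : ((hsum p n N : ℚ) : K) = coeff N (fser K p ^ n) := by
  have h : fser K p ^ n = ∏ _i : Fin n, fser K p := by simp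
  rw [h, coeff_prod]
  unfold hsum
  push_cast
  have step : ∑ l ∈ Finset.univ.finsuppAntidiag N, ∏ i : Fin n, coeff (l i) (fser K p) =
    ∑ l ∈ (Finset.univ.finsuppAntidiag N).filter (fun l : Fin n →₀ ℕ => ∀ i, ¬ p ∣ l i),
      ∏ i : Fin n, coeff (l i) (fser K p) := by
    symm
    apply Finset.sum_subset (Finset.filter_subset _ _)
    intro l hl hl2
    simp only [Finset.mem_filter, hl, true_and, not_forall, not_not] at hl2
    obtain ⟨i, hi⟩ := hl2
    apply Finset.prod_eq_zero (Finset.mem_univ i)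
    simp [fser, hi]
  rw [step]
  refine Finset.sum_nbij' (fun l => Finsupp.equivFunOnFinite.symm l) (fun l => (l : Fin n → ℕ)) ?_ ?_ ?_ ?_ ?_
  · intro l hl
    simp only [Finset.mem_filter, Fintype.mem_piFinset, Finset.mem_finsuppAntidiag] at hl ⊢
    exact ⟨⟨by simpa using hl.2.1, Finset.subset_univ _⟩, by simpa using hl.2.2⟩
  · intro l hl
    simp only [Finset.mem_filter, Fintype.mem_piFinset, Finset.mem_finsuppAntidiag, Finset.mem_Icc] at hl ⊢
    refine ⟨fun i => ⟨?_, ?_⟩, hl.1.1, hl.2⟩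
    · rcases Nat.eq_zero_or_pos (l i) with h0 | h0
      · exact absurd (h0 ▸ dvd_zero p) (hl.2 i)
      · exact h0
    · rw [← hl.1.1]
      exact Finset.single_le_sum (f := fun i => l i) (fun _ _ => Nat.zero_le _) (Finset.mem_univ i)
  · intro l _; rfl
  · intro l _; ext; rfl
  · intro l hl
    simp only [Finset.mem_filter] at hl
    refine Finset.prod_congr rfl fun i _ => ?_
    simp [fser, hl.2.2 i]

lemma hsum_eq_UV (hp : p ≠ 0) (n N : ℕ) :
    ((hsum p n N : ℚ) : K) = (n.factorial : K) * (coeff N (User K * Vser K p)).coeff n := by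
  classical
  rw [hsum_eq]
  have h := congrArg (coeff N) (fser_pow (K := K) p hp n)
  rw [coeff_mk, coeff_C_mul] at h
  rw [h]
  have h2 : (n.factorial : K) ≠ 0 := by exact_mod_cast Nat.factorial_ne_zero n
  field_simp
end PartA
section PartB

/-- `w_m = ∏_{i=1}^{p-1} (i + p m)` -/
def wnum (p m : ℕ) : ℕ := ∏ i ∈ Finset.range (p - 1), (i + 1 + p * m)

/-- `R_m = ∏_{i=1}^{p-1} (T + i + p m)` -/
noncomputable def Rpol (A : Type*) [CommRing A] (p m : ℕ) : Polynomial A :=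
  ∏ i ∈ Finset.range (p - 1), (Polynomial.X + Polynomial.C ((i + 1 + p * m : ℕ) : A))

lemma wnum_ne_zero (p m : ℕ) : wnum p m ≠ 0 := by
  unfold wnum
  exact Finset.prod_ne_zero_iff.2 fun i _ => by omega

lemma factorial_mul (p k : ℕ) (hp : p ≠ 0) :
    (p * k).factorial = p ^ k * k.factorial * ∏ m ∈ Finset.range k, wnum p m := by
  induction k with
  | zero => simp
  | succ k ih =>
    rw [← Finset.prod_range_add_one_eq_factorial] at ih ⊢
    rw [Nat.mul_succ, Finset.prod_range_add, ih, Finset.prod_range_succ _ k, Nat.factorial_succ]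
    have e : ∏ x ∈ Finset.range p, (p * k + x + 1) = wnum p k * (p * (k + 1)) := by
      obtain ⟨q, rfl⟩ := Nat.exists_eq_succ_of_ne_zero hp
      rw [Finset.prod_range_succ]
      unfold wnum
      congr 1
      · apply Finset.prod_congr (by simp)
        intro i _
        ring
    rw [e]
    ring

lemma prod_range_mul (A : Type*) [CommRing A] (p k : ℕ) (hp : p ≠ 0) :
    ∏ i ∈ Finset.range (p * k), (Polynomial.X + Polynomial.C (i : A)) =
      ∏ m ∈ Finset.range k, ((Polynomial.X + Polynomial.C ((p * m : ℕ) : A)) * Rpol A p m) := by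
  induction k with
  | zero => simp
  | succ k ih =>
    rw [Nat.mul_succ, Finset.prod_range_add, ih, Finset.prod_range_succ _ k]
    congr 1
    obtain ⟨q, rfl⟩ := Nat.exists_eq_succ_of_ne_zero hp
    rw [Finset.prod_range_succ']
    rw [mul_comm]
    congr 1
    unfold Rpol
    apply Finset.prod_congr (by simp)
    intro i _
    congr 3
    ring

open PowerSeries in
lemma UV_coeff_mul {K : Type*} [Field K] [CharZero K] (p k : ℕ) (hp : p ≠ 0) :
    coeff (p * k) (User K * Vser K p) =
      ∑ j ∈ Finset.range (k + 1), ucoef K (p * (k - j)) * vcoef K p j := by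
  rw [mul_comm (User K), coeff_mul, Finset.Nat.sum_antidiagonal_eq_sum_range_succ_mk]
  symm
  have inj : Set.InjOn (fun j => p * j) (Finset.range (k + 1) : Set ℕ) := by
    intro a _ b _ h
    exact Nat.eq_of_mul_eq_mul_left (Nat.pos_of_ne_zero hp) h
  calc _ = ∑ i ∈ (Finset.range (k + 1)).image (fun j => p * j),
        coeff i (Vser K p) * coeff (p * k - i) (User K) := by
        rw [Finset.sum_image inj]
        refine Finset.sum_congr rfl fun j hj => ?_
        rw [Nat.mul_sub]
        simp [User, Vser, Nat.mul_div_cancel_left _ (Nat.pos_of_ne_zero hp), mul_comm]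
    _ = _ := by
        apply Finset.sum_subset
        · intro i hi
          simp only [Finset.mem_image, Finset.mem_range] at hi ⊢
          obtain ⟨j, hj, rfl⟩ := hi
          have := Nat.mul_le_mul_left p (Nat.le_of_lt_succ hj)
          omega
        · intro i hi hi2
          have : ¬ p ∣ i := by
            rintro ⟨j, rfl⟩
            apply hi2
            simp only [Finset.mem_image, Finset.mem_range] at hi ⊢
            refine ⟨j, ?_, rfl⟩
            have := Nat.le_of_mul_le_mul_left (Nat.le_of_lt_succ hi) (Nat.pos_of_ne_zero hp)
            omega
          simp [Vser, this]

open Polynomial in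
/-- `S_m = R_m / w_m` over a field -/
noncomputable def Spol (K : Type*) [Field K] (p m : ℕ) : Polynomial K :=
  C (1 / (wnum p m : K)) * Rpol K p m

open Polynomial in
lemma ucoef_mul {K : Type*} [Field K] [CharZero K] (p k : ℕ) (hp : p ≠ 0) :
    C ((p : K) ^ k * (k.factorial : K)) * ucoef K (p * k) =
      ∏ m ∈ Finset.range k, ((X + C ((p * m : ℕ) : K)) * Spol K p m) := by
  unfold ucoef Spol
  rw [prod_range_mul _ _ _ hp, factorial_mul _ _ hp, ← mul_assoc, ← C_mul]
  have : (p : K) ^ k * (k.factorial : K) *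
      (1 / ((p ^ k * k.factorial * ∏ m ∈ Finset.range k, wnum p m : ℕ) : K)) =
      ∏ m ∈ Finset.range k, (1 / (wnum p m : K)) := by
    rw [Finset.prod_div_distrib]
    push_cast
    have h0 : (p : K) ≠ 0 := by exact_mod_cast hp
    have h2 : (k.factorial : K) ≠ 0 := by exact_mod_cast Nat.factorial_ne_zero k
    have h3 : ∏ m ∈ Finset.range k, (wnum p m : K) ≠ 0 :=
      Finset.prod_ne_zero_iff.2 fun m _ => by exact_mod_cast wnum_ne_zero p m
    rw [Finset.prod_const_one]
    field_simp
  rw [this, map_prod, ← Finset.prod_mul_distrib]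
  refine Finset.prod_congr rfl fun m _ => ?_
  ring

open Polynomial in
lemma vcoef_mul {K : Type*} [Field K] [CharZero K] (p k : ℕ) (hp : p ≠ 0) :
    C ((p : K) ^ k * (k.factorial : K)) * vcoef K p k =
      ∏ i ∈ Finset.range k, (C ((p : K) * (i : K)) - X) := by
  unfold vcoef
  rw [← mul_assoc, ← C_mul]
  have h0 : (p : K) ≠ 0 := by exact_mod_cast hp
  have h2 : (k.factorial : K) ≠ 0 := by exact_mod_cast Nat.factorial_ne_zero k
  rw [mul_one_div_cancel (by positivity), C_1, one_mul]

open Polynomial in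
lemma UV_three {K : Type*} [Field K] [CharZero K] (p : ℕ) (hp : p ≠ 0) :
    C (6 * (p : K) ^ 3) * PowerSeries.coeff (p * 3) (User K * Vser K p) =
      X ^ 3 * (Spol K p 0 * Spol K p 1 * Spol K p 2 - 3 * (Spol K p 0 * Spol K p 1)
        + 3 * Spol K p 0 - 1)
      + 3 * C (p : K) * X ^ 2 * (Spol K p 0 * Spol K p 1 * Spol K p 2 - Spol K p 0 * Spol K p 1
        - Spol K p 0 + 1)
      + 2 * C (p : K) ^ 2 * X * (Spol K p 0 * Spol K p 1 * Spol K p 2 - 1) := by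
  rw [UV_coeff_mul _ _ hp]
  have u0 := ucoef_mul (K := K) p 0 hp
  have u1 := ucoef_mul (K := K) p 1 hp
  have u2 := ucoef_mul (K := K) p 2 hp
  have u3 := ucoef_mul (K := K) p 3 hp
  have v0 := vcoef_mul (K := K) p 0 hp
  have v1 := vcoef_mul (K := K) p 1 hp
  have v2 := vcoef_mul (K := K) p 2 hp
  have v3 := vcoef_mul (K := K) p 3 hp
  have f3 : (Nat.factorial 3 : K) = 6 := by norm_num [Nat.factorial]
  simp only [Finset.prod_range_succ, Finset.prod_range_zero, f3, Nat.factorial_two, Nat.factorial_one,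
    Nat.factorial_zero, map_mul, map_pow, pow_zero, pow_one, Nat.cast_one, map_one, one_mul,
    Nat.cast_mul, Nat.cast_zero, mul_zero, map_zero, add_zero, mul_one, zero_sub, Nat.cast_ofNat] at *
  have e6 : (C (6 : K)) = 6 := map_ofNat C 6
  have e2 : (C (2 : K)) = 2 := map_ofNat C 2
  rw [e2] at u2 u3 v2 v3
  rw [e6] at u3 v3 ⊢
  simp only [Finset.sum_range_succ, Finset.sum_range_zero, zero_add, Nat.sub_zero, Nat.sub_self,
    show 3 - 1 = 2 from rfl, show 3 - 2 = 1 from rfl, mul_zero, mul_one, u0, v0]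
  generalize Spol K p 0 = s0 at *
  generalize Spol K p 1 = s1 at *
  generalize Spol K p 2 = s2 at *
  generalize ucoef K p = a1 at *
  generalize ucoef K (p*2) = a2 at *
  generalize ucoef K (p*3) = a3 at *
  generalize vcoef K p 1 = b1 at *
  generalize vcoef K p 2 = b2 at *
  generalize vcoef K p 3 = b3 at *
  generalize (C (p:K)) = P at *
  linear_combination u3 + v3 + 3 * P * b1 * u2 + 3 * (X * s0 * ((X + P) * s1)) * v1
    + 6 * P ^ 2 * b2 * u1 + 3 * (X * s0) * v2
end PartB
section PartC
open Polynomial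

lemma Rpol_shift (p : ℕ) (A : Type*) [CommRing A] (h0 : p ≠ 0) :
    (X * Rpol A p 0).comp (X + 1) = X * Rpol A p 0 + C (p : A) * Rpol A p 0 := by
  obtain ⟨q, rfl⟩ := Nat.exists_eq_succ_of_ne_zero h0
  have e1 : (X * Rpol A (q + 1) 0).comp (X + 1) = ∏ i ∈ Finset.range (q + 1), (X + C ((i + 1 : ℕ) : A)) := by
    rw [Finset.prod_range_succ']
    simp only [Rpol, mul_comp, X_comp, prod_comp, add_comp, C_comp]
    rw [mul_comm]
    congr 1
    · apply Finset.prod_congr (by simp)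
      intro i _
      push_cast
      simp
      ring
    · simp
  have e2 : X * Rpol A (q + 1) 0 + C ((q + 1 : ℕ) : A) * Rpol A (q + 1) 0 =
      ∏ i ∈ Finset.range (q + 1), (X + C ((i + 1 : ℕ) : A)) := by
    rw [Finset.prod_range_succ, ← add_mul, mul_comm]
    congr 1
  rw [Nat.succ_eq_add_one, e1, e2]

lemma Rpol_monic_deg (p : ℕ) (A : Type*) [CommRing A] [Nontrivial A] (m : ℕ) :
    (Rpol A p m).Monic ∧ (Rpol A p m).natDegree = p - 1 := by
  constructor
  · exact monic_prod_of_monic _ _ fun i _ => monic_X_add_C _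
  · unfold Rpol
    rw [natDegree_prod_of_monic _ _ fun i _ => monic_X_add_C _]
    simp only [natDegree_X_add_C]
    simp

lemma s_rec (p : ℕ) (A : Type*) [CommRing A] [Nontrivial A] (h0 : p ≠ 0) (m : ℕ) :
    ∑ j ∈ Finset.range (p + 1), (X * Rpol A p 0).coeff j * (j.choose m : A) =
     (X * Rpol A p 0).coeff m + (p : A) * (X * Rpol A p 0).coeff (m + 1) := by
  have h := congrArg (fun f => f.coeff m) (Rpol_shift p A h0)
  simp only [coeff_add, coeff_C_mul] at h
  rw [coeff_X_mul (n := m), ← h]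
  have hd : (X * Rpol A p 0).natDegree < p + 1 := by
    have := (Rpol_monic_deg p A 0).2
    refine lt_of_le_of_lt natDegree_mul_le ?_
    rw [this]
    simp
    omega
  conv_rhs => rw [Polynomial.as_sum_range' (X * Rpol A p 0) (p + 1) hd]
  rw [Polynomial.sum_comp, finsetSum_coeff]
  refine Finset.sum_congr rfl fun j _ => ?_
  rw [← C_mul_X_pow_eq_monomial, mul_comp, C_comp, X_pow_comp, coeff_C_mul, coeff_X_add_one_pow]

variable (p : ℕ) [hp : Fact p.Prime]

lemma natCast_isUnit (k : ℕ) (h0 : 0 < k) (hk : k < p) : IsUnit (k : ℤ_[p]) := by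
  rw [PadicInt.isUnit_iff, PadicInt.norm_natCast_eq_one_iff]
  exact Nat.coprime_of_lt_prime h0.ne' hk hp.out

lemma exists_beta : ∃ β : ℕ → ℤ_[p], ∀ k, k + 2 ≤ p → ((β k : ℤ_[p]) : ℚ_[p]) = ((_root_.bernoulli k : ℚ) : ℚ_[p]) := by
  have h : ∀ k, k + 2 ≤ p → ∃ x : ℤ_[p], (x : ℚ_[p]) = ((_root_.bernoulli k : ℚ) : ℚ_[p]) := by
    intro k
    induction k using Nat.strong_induction_on with
    | _ k ih =>
      intro hk
      rcases Nat.eq_zero_or_pos k with rfl | hk0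
      · exact ⟨1, by simp⟩
      choose! x hx using ih
      obtain ⟨u, hu⟩ := natCast_isUnit p (k + 1) (by omega) (by omega)
      refine ⟨-(↑u⁻¹ * ∑ j ∈ Finset.range k, ((k + 1).choose j : ℤ_[p]) * x j), ?_⟩
      have hs := _root_.sum_bernoulli (k + 1)
      rw [if_neg (by omega), Finset.sum_range_succ] at hs
      have hs2 := congrArg (fun t : ℚ => (t : ℚ_[p])) hs
      simp only [Rat.cast_add, Rat.cast_sum, Rat.cast_mul, Rat.cast_natCast, Rat.cast_zero] at hs2
      have hu1 : ((↑u⁻¹ : ℤ_[p]) : ℚ_[p]) * ((k + 1 : ℕ) : ℚ_[p]) = 1 := by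
        rw [← PadicInt.coe_natCast, ← PadicInt.coe_mul, ← hu, Units.inv_mul, PadicInt.coe_one]
      rw [Nat.choose_succ_self_right] at hs2
      rw [PadicInt.coe_neg, PadicInt.coe_mul, PadicInt.coe_sum]
      have : ∑ i ∈ Finset.range k, (((((k + 1).choose i : ℤ_[p]) * x i) : ℤ_[p]) : ℚ_[p]) =
          ∑ i ∈ Finset.range k, ((k + 1).choose i : ℚ_[p]) * ((_root_.bernoulli i : ℚ) : ℚ_[p]) := by
        refine Finset.sum_congr rfl fun i hi => ?_
        have := Finset.mem_range.1 hi
        rw [PadicInt.coe_mul, hx i this (by omega), PadicInt.coe_natCast]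
      rw [this]
      linear_combination (-((↑u⁻¹ : ℤ_[p]) : ℚ_[p])) * hs2 + ((_root_.bernoulli k : ℚ) : ℚ_[p]) * hu1
  choose! β hβ using h
  exact ⟨β, hβ⟩

lemma beta_sum (β : ℕ → ℤ_[p]) (hβ : ∀ k, k + 2 ≤ p → ((β k : ℤ_[p]) : ℚ_[p]) = ((_root_.bernoulli k : ℚ) : ℚ_[p]))
    (i : ℕ) (hi : 1 ≤ i) (hip : i + 2 ≤ p) :
    ∑ k ∈ Finset.range (i + 1), ((i + 1).choose k : ℤ_[p]) * β k = 0 := by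
  apply PadicInt.ext
  rw [PadicInt.coe_sum]
  have hs := _root_.sum_bernoulli (i + 1)
  rw [if_neg (by omega)] at hs
  have hs2 := congrArg (fun t : ℚ => (t : ℚ_[p])) hs
  simp only [Rat.cast_sum, Rat.cast_mul, Rat.cast_natCast, Rat.cast_zero] at hs2
  rw [PadicInt.coe_zero, ← hs2]
  refine Finset.sum_congr rfl fun k hk => ?_
  have := Finset.mem_range.1 hk
  rw [PadicInt.coe_mul, hβ k (by omega), PadicInt.coe_natCast]

/-- reindexed and multiplied by `m`, with `m = p - 1 - i` -/
lemma s_rec' (i : ℕ) (hip : i + 2 ≤ p) :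
    ∑ k ∈ Finset.range (i + 1), ((p - k : ℕ) : ℤ_[p]) * ((p - 1 - k).choose (p - 2 - i) : ℤ_[p]) *
      (X * Rpol ℤ_[p] p 0).coeff (p - k) =
     ((p - 1 - i : ℕ) : ℤ_[p]) * ((p : ℤ_[p]) * (X * Rpol ℤ_[p] p 0).coeff (p - i)) := by
  have h := s_rec p ℤ_[p] hp.out.ne_zero (p - 1 - i)
  rw [← Finset.sum_range_reflect] at h
  have e : p + 1 = (i + 1) + (1 + (p - 1 - i)) := by omega
  conv_lhs at h => rw [e, Finset.sum_range_add _ (i + 1), Finset.sum_range_add _ 1, Finset.sum_range_one]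
  rw [Finset.sum_eq_zero (s := Finset.range (p - 1 - i)), add_zero] at h
  · rw [show p - 1 - i + 1 = p - i by omega,
      show (i + 1 + (1 + (p - 1 - i)) - 1 - (i + 1 + 0)) = p - 1 - i by omega, Nat.choose_self,
      Nat.cast_one, mul_one, add_comm] at h
    have h' := add_left_cancel h
    rw [← h', Finset.mul_sum]
    refine Finset.sum_congr rfl fun k hk => ?_
    have hk' := Finset.mem_range.1 hk
    rw [show (i + 1 + (1 + (p - 1 - i)) - 1 - k) = p - k by omega]
    have hc := Nat.add_one_mul_choose_eq (p - 1 - k) (p - 2 - i)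
    rw [show p - 1 - k + 1 = p - k by omega, show p - 2 - i + 1 = p - 1 - i by omega] at hc
    have hc' : ((p - k : ℕ) : ℤ_[p]) * ((p - 1 - k).choose (p - 2 - i) : ℤ_[p]) =
       ((p - k).choose (p - 1 - i) : ℤ_[p]) * ((p - 1 - i : ℕ) : ℤ_[p]) := by exact_mod_cast hc
    rw [hc']
    ring
  · intro x hx
    have := Finset.mem_range.1 hx
    rw [Nat.choose_eq_zero_of_lt (by omega)]
    simp

lemma s_top : (X * Rpol ℤ_[p] p 0).coeff p = 1 := by
  have h := Rpol_monic_deg p ℤ_[p] 0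
  have h1 := h.1
  unfold Monic leadingCoeff at h1
  rw [h.2] at h1
  have h2 := coeff_X_mul (Rpol ℤ_[p] p 0) (p - 1)
  rw [h1, Nat.sub_add_cancel hp.out.one_le] at h2
  exact h2

lemma s_dvd (i : ℕ) (hi : 1 ≤ i) (hip : i + 2 ≤ p) : (p : ℤ_[p]) ∣ (X * Rpol ℤ_[p] p 0).coeff (p - i) := by
  induction i using Nat.strong_induction_on with
  | _ i ih =>
    have h := s_rec' p i hip
    rw [Finset.sum_range_succ] at h
    have h1 : (p : ℤ_[p]) ∣ ∑ k ∈ Finset.range i, ((p - k : ℕ) : ℤ_[p]) * ((p - 1 - k).choose (p - 2 - i) : ℤ_[p]) *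
      (X * Rpol ℤ_[p] p 0).coeff (p - k) := by
      apply Finset.dvd_sum
      intro k hk
      have hk' := Finset.mem_range.1 hk
      rcases Nat.eq_zero_or_pos k with rfl | hk0
      · rw [Nat.sub_zero, mul_assoc]; exact dvd_mul_right _ _
      · exact Dvd.dvd.mul_left (ih k hk' hk0 (by omega)) _
    have h2 : (p : ℤ_[p]) ∣ ((p - i : ℕ) : ℤ_[p]) * ((p - 1 - i).choose (p - 2 - i) : ℤ_[p]) *
      (X * Rpol ℤ_[p] p 0).coeff (p - i) := by
      rw [← dvd_add_right h1, h]
      exact Dvd.dvd.mul_left (dvd_mul_right _ _) _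
    have e : (p - 1 - i).choose (p - 2 - i) = p - 1 - i := by
      rw [show p - 1 - i = (p - 2 - i) + 1 by omega, Nat.choose_succ_self_right]
    rw [e, mul_assoc] at h2
    have h3 := ((natCast_isUnit p (p - i) (by omega) (by omega)).dvd_mul_left).1 h2
    exact ((natCast_isUnit p (p - 1 - i) (by omega) (by omega)).dvd_mul_left).1 h3

lemma choose_mod (i k : ℕ) (hip : i + 2 ≤ p) (hk : k ≤ i) :
    ((p - 1 - k).choose (p - 2 - i) : ZMod p) = (-1) ^ (i + 1 - k) * ((i + 1).choose k : ZMod p) := by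
  have hd : (p - 1 - k) - (p - 2 - i) = i + 1 - k := by omega
  rw [← Nat.choose_symm (by omega : p - 2 - i ≤ p - 1 - k), hd]
  have hu : ((i + 1 - k).factorial : ZMod p) ≠ 0 := by
    rw [Ne, ZMod.natCast_eq_zero_iff, hp.out.dvd_factorial]
    omega
  apply mul_left_cancel₀ hu
  have h1 := Nat.descFactorial_eq_factorial_mul_choose (p - 1 - k) (i + 1 - k)
  have h2 := Nat.ascFactorial_eq_factorial_mul_choose k (i + 1 - k)
  rw [show k + (i + 1 - k) = i + 1 by omega, Nat.choose_symm (by omega : k ≤ i + 1)] at h2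
  have h1' := congrArg (fun t : ℕ => (t : ZMod p)) h1
  have h2' := congrArg (fun t : ℕ => (t : ZMod p)) h2
  simp only [Nat.cast_mul] at h1' h2'
  rw [← h1']
  rw [mul_left_comm, ← h2', Nat.descFactorial_eq_prod_range, Nat.ascFactorial_eq_prod_range]
  push_cast
  have hc : (-1 : ZMod p) ^ (i + 1 - k) = ∏ _t ∈ Finset.range (i + 1 - k), (-1 : ZMod p) := by
    rw [Finset.prod_const, Finset.card_range]
  rw [hc, ← Finset.prod_mul_distrib]
  refine Finset.prod_congr rfl fun t ht => ?_
  have ht' := Finset.mem_range.1 ht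
  have e : (p - 1 - k - t) + (k + 1 + t) = p := by omega
  have e' := congrArg (fun t : ℕ => (t : ZMod p)) e
  simp only [Nat.cast_add, CharP.cast_eq_zero, Nat.cast_one] at e'
  linear_combination e'

lemma exists_b (β : ℕ → ℤ_[p])
    (hβ : ∀ k, k + 2 ≤ p → ((β k : ℤ_[p]) : ℚ_[p]) = ((_root_.bernoulli k : ℚ) : ℚ_[p])) :
    ∃ b : ℕ → ℤ_[p], ∀ k, k + 2 ≤ p → (p : ℤ_[p]) * b k = ((p - k : ℕ) : ℤ_[p]) * (X * Rpol ℤ_[p] p 0).coeff (p - k)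
      ∧ PadicInt.toZMod (b k) = (-1) ^ k * PadicInt.toZMod (β k) := by
  have hp0 : (p : ℤ_[p]) ≠ 0 := by exact_mod_cast hp.out.ne_zero
  have hz : PadicInt.toZMod (p : ℤ_[p]) = 0 := by simp
  have ex : ∀ k, k + 2 ≤ p → ∃ x : ℤ_[p], (p : ℤ_[p]) * x = ((p - k : ℕ) : ℤ_[p]) * (X * Rpol ℤ_[p] p 0).coeff (p - k) := by
    intro k hk
    rcases Nat.eq_zero_or_pos k with rfl | hk0
    · exact ⟨1, by rw [Nat.sub_zero, s_top]⟩
    · obtain ⟨y, hy⟩ := s_dvd p k hk0 hk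
      exact ⟨((p - k : ℕ) : ℤ_[p]) * y, by rw [hy]; ring⟩
  choose! b hb using ex
  refine ⟨b, fun k hk => ⟨hb k hk, ?_⟩⟩
  have hrec : ∀ i, 1 ≤ i → i + 2 ≤ p →
      ∑ k ∈ Finset.range (i + 1), (-1) ^ k * ((i + 1).choose k : ZMod p) * PadicInt.toZMod (b k) = 0 := by
    intro i hi hip
    have h := s_rec' p i hip
    have h1 : ∑ k ∈ Finset.range (i + 1), ((p - 1 - k).choose (p - 2 - i) : ℤ_[p]) * b k =
        ((p - 1 - i : ℕ) : ℤ_[p]) * (X * Rpol ℤ_[p] p 0).coeff (p - i) := by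
      apply mul_left_cancel₀ hp0
      rw [Finset.mul_sum]
      calc _ = ∑ k ∈ Finset.range (i + 1), ((p - k : ℕ) : ℤ_[p]) * ((p - 1 - k).choose (p - 2 - i) : ℤ_[p]) *
      (X * Rpol ℤ_[p] p 0).coeff (p - k) := by
            refine Finset.sum_congr rfl fun k hk => ?_
            have := Finset.mem_range.1 hk
            linear_combination ((p - 1 - k).choose (p - 2 - i) : ℤ_[p]) * hb k (by omega)
        _ = _ := by rw [h]; ring
    obtain ⟨y, hy⟩ := s_dvd p i hi hip
    have h2 := congrArg PadicInt.toZMod h1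
    rw [hy, map_mul, map_mul, hz, zero_mul, mul_zero, map_sum] at h2
    have h3 : ∑ k ∈ Finset.range (i + 1), (-1) ^ k * ((i + 1).choose k : ZMod p) * PadicInt.toZMod (b k) =
        (-1) ^ (i + 1) * ∑ k ∈ Finset.range (i + 1), PadicInt.toZMod (((p - 1 - k).choose (p - 2 - i) : ℤ_[p]) * b k) := by
      rw [Finset.mul_sum]
      refine Finset.sum_congr rfl fun k hk => ?_
      have hk' := Finset.mem_range.1 hk
      rw [map_mul, map_natCast, choose_mod p i k hip (by omega)]
      have : (-1 : ZMod p) ^ (i + 1) = (-1) ^ k * (-1) ^ (i + 1 - k) := by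
        rw [← pow_add]; congr 1; omega
      rw [this]
      have h4 : ((-1 : ZMod p) ^ (i + 1 - k)) * (-1) ^ (i + 1 - k) = 1 := by
        rw [← mul_pow]; simp
      linear_combination (-(-1) ^ k * ((i + 1).choose k : ZMod p) * PadicInt.toZMod (b k)) * h4
    rw [h3, h2, mul_zero]
  induction k using Nat.strong_induction_on with
  | _ k ih =>
    rcases Nat.eq_zero_or_pos k with rfl | hk0
    · have h := hb 0 hk
      rw [Nat.sub_zero, s_top] at h
      have h1 := mul_left_cancel₀ hp0 h
      have h2 : β 0 = 1 := by
        apply PadicInt.ext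
        rw [hβ 0 hk]; simp
      rw [h1, h2]; simp
    · have h := hrec k hk0 hk
      have h' := congrArg PadicInt.toZMod (beta_sum p β hβ k hk0 hk)
      rw [map_sum, map_zero, Finset.sum_range_succ] at h'
      rw [Finset.sum_range_succ] at h
      have e : ∑ x ∈ Finset.range k, (-1) ^ x * ((k + 1).choose x : ZMod p) * PadicInt.toZMod (b x) =
         ∑ x ∈ Finset.range k, PadicInt.toZMod (((k + 1).choose x : ℤ_[p]) * β x) := by
        refine Finset.sum_congr rfl fun x hx => ?_
        have hx' := Finset.mem_range.1 hx
        rw [ih x hx' (by omega), map_mul, map_natCast]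
        have h4 : ((-1 : ZMod p) ^ x) * (-1) ^ x = 1 := by
          rw [← mul_pow]; simp
        linear_combination (((k + 1).choose x : ZMod p) * PadicInt.toZMod (β x)) * h4
      rw [e] at h
      rw [map_mul, map_natCast] at h'
      rw [Nat.choose_succ_self_right] at h h'
      have hu : ((k + 1 : ℕ) : ZMod p) ≠ 0 := by
        rw [Ne, ZMod.natCast_eq_zero_iff]
        intro hd
        have := Nat.le_of_dvd (by omega) hd
        omega
      apply mul_left_cancel₀ hu
      have h4 : ((-1 : ZMod p) ^ k) * (-1) ^ k = 1 := by
        rw [← mul_pow]; simp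
      linear_combination (-1) ^ k * (h - h') - ((k + 1 : ℕ) : ZMod p) * PadicInt.toZMod (b k) * h4
end PartC
section PartD
open Polynomial

lemma taylor2 {A : Type*} [CommRing A] (q : A[X]) :
    ∃ h : A[X], 2 * h = derivative (derivative q) ∧
      ∀ y : A, ∃ r : A[X], q.comp (X + C y) = q + C y * derivative q + C y ^ 2 * h + C y ^ 3 * r := by
  induction q using Polynomial.induction_on with
  | C a => exact ⟨0, by simp, fun y => ⟨0, by simp⟩⟩
  | add f g hf hg =>
    obtain ⟨h1, e1, t1⟩ := hf
    obtain ⟨h2, e2, t2⟩ := hg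
    refine ⟨h1 + h2, by rw [mul_add, e1, e2]; simp, fun y => ?_⟩
    obtain ⟨r1, u1⟩ := t1 y
    obtain ⟨r2, u2⟩ := t2 y
    refine ⟨r1 + r2, ?_⟩
    rw [add_comp, u1, u2, derivative_add]
    ring
  | monomial n a ih =>
    rw [pow_succ, ← mul_assoc]
    generalize C a * X ^ n = f at *
    obtain ⟨h1, e1, t1⟩ := ih
    refine ⟨X * h1 + derivative f, ?_, fun y => ?_⟩
    · simp only [derivative_mul, derivative_X, derivative_add, derivative_one]
      linear_combination X * e1
    · obtain ⟨r1, u1⟩ := t1 y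
      refine ⟨X * r1 + h1 + C y * r1, ?_⟩
      rw [mul_comp, X_comp, u1]
      simp only [derivative_mul, derivative_X]
      ring

lemma add_pow_mem_span {B : Type*} [CommRing B] (x y : B) (a b : ℕ) :
    (x + y) ^ (a + b) ∈ Ideal.span {y ^ (b + 1), x ^ a} := by
  rw [add_pow]
  apply Ideal.sum_mem
  intro m hm
  have hm' := Finset.mem_range.1 hm
  by_cases h : a ≤ m
  · have e : x ^ m = x ^ (m - a) * x ^ a := by rw [← pow_add]; congr 1; omega
    rw [e]
    have : x ^ a ∈ Ideal.span {y ^ (b + 1), x ^ a} := Ideal.subset_span (by simp)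
    have h2 := Ideal.mul_mem_left (Ideal.span {y ^ (b + 1), x ^ a})
      (x ^ (m - a) * y ^ (a + b - m) * ((a + b).choose m : B)) this
    convert h2 using 1
    ring
  · have e : y ^ (a + b - m) = y ^ (a - m - 1) * y ^ (b + 1) := by rw [← pow_add]; congr 1; omega
    rw [e]
    have : y ^ (b + 1) ∈ Ideal.span {y ^ (b + 1), x ^ a} := Ideal.subset_span (by simp)
    have h2 := Ideal.mul_mem_left (Ideal.span {y ^ (b + 1), x ^ a})
      (x ^ m * y ^ (a - m - 1) * ((a + b).choose m : B)) this
    convert h2 using 1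
    ring

lemma coeff_dvd_of_mem {A : Type*} [CommRing A] (c : A) (a b m : ℕ) (hm : m < b) (F : A[X])
    (hF : F ∈ Ideal.span {(C c) ^ a, (X : A[X]) ^ b}) : c ^ a ∣ F.coeff m := by
  rw [Ideal.mem_span_pair] at hF
  obtain ⟨u, v, rfl⟩ := hF
  rw [coeff_add, ← C_pow, coeff_mul_C, coeff_mul_X_pow', if_neg (by omega), add_zero]
  exact dvd_mul_left _ _

lemma alg3 {B : Type*} [CommRing B] (P q d h r1 r2 z1 z2 q1 q2 : B)
    (h1 : q1 = q + P * d + P ^ 2 * h + P ^ 3 * r1)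
    (h2 : q2 = q + 2 * P * d + 4 * P ^ 2 * h + P ^ 3 * r2) (hP : P ^ 4 = 0) :
    (1 + P ^ 3 * z1) * (1 + P ^ 3 * z2) * ((1 + P * q) * (1 + P * q1) * (1 + P * q2))
      - 3 * ((1 + P ^ 3 * z1) * ((1 + P * q) * (1 + P * q1))) + 3 * (1 + P * q) - 1
    = P ^ 3 * (2 * h + 3 * (q * d) + q ^ 3 + (z2 - 2 * z1)) := by
  obtain ⟨a1, ha1⟩ : ∃ a, a = d + P * h + P ^ 2 * r1 := ⟨_, rfl⟩
  obtain ⟨a2, ha2⟩ : ∃ a, a = 2 * d + 4 * P * h + P ^ 2 * r2 := ⟨_, rfl⟩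
  have k1 : q1 = q + P * a1 := by rw [h1, ha1]; ring
  have k2 : q2 = q + P * a2 := by rw [h2, ha2]; ring
  obtain ⟨E2, hE2⟩ : ∃ E, E = q + q1 + P * q * q1 := ⟨_, rfl⟩
  obtain ⟨E3, hE3⟩ : ∃ E, E = q + q1 + q2 + P * (q * q1 + q * q2 + q1 * q2) + P ^ 2 * q * q1 * q2 := ⟨_, rfl⟩
  have m2 : (1 + P * q) * (1 + P * q1) = 1 + P * E2 := by rw [hE2]; ring
  have m3 : (1 + P * q) * (1 + P * q1) * (1 + P * q2) = 1 + P * E3 := by rw [hE3]; ring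
  have main : P * E3 - 3 * (P * E2) + 3 * P * q = P ^ 3 * (2 * h + 3 * (q * d) + q ^ 3) +
      P ^ 4 * (r2 - 2 * r1 + q * (7 * h + P * (2 * r2 - r1)) + a1 * a2 + q * (q * a1 + q * a2 + P * a1 * a2)) := by
    rw [hE3, hE2, k1, k2, ha1, ha2]
    ring
  rw [m3, m2]
  linear_combination main + (r2 - 2 * r1 + q * (7 * h + P * (2 * r2 - r1)) + a1 * a2 +
    q * (q * a1 + q * a2 + P * a1 * a2) + (z1 + z2) * E3 + P ^ 2 * z1 * z2 * (1 + P * E3) - 3 * z1 * E2) * hP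

lemma alg2 {B : Type*} [CommRing B] (P q d h r1 r2 z1 z2 q1 q2 : B)
    (h1 : q1 = q + P * d + P ^ 2 * h + P ^ 3 * r1)
    (h2 : q2 = q + 2 * P * d + 4 * P ^ 2 * h + P ^ 3 * r2) (hP : P ^ 3 = 0) :
    (1 + P ^ 3 * z1) * (1 + P ^ 3 * z2) * ((1 + P * q) * (1 + P * q1) * (1 + P * q2))
      - ((1 + P ^ 3 * z1) * ((1 + P * q) * (1 + P * q1))) - (1 + P * q) + 1
    = P ^ 2 * (2 * (d + q ^ 2)) := by
  rw [hP] at h1 h2 ⊢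
  simp only [zero_mul, add_zero, mul_one, one_mul] at h1 h2 ⊢
  have k1 : q1 = q + P * (d + P * h) := by rw [h1]; ring
  obtain ⟨a1, ha1⟩ : ∃ a, a = d + P * h := ⟨_, rfl⟩
  obtain ⟨a2, ha2⟩ : ∃ a, a = 2 * d + 4 * P * h := ⟨_, rfl⟩
  have k1 : q1 = q + P * a1 := by rw [h1, ha1]; ring
  have k2 : q2 = q + P * a2 := by rw [h2, ha2]; ring
  have main : P * a2 * P + P ^ 2 * (q * q2 + q1 * q2) = P ^ 2 * (2 * (d + q ^ 2)) +
     P ^ 3 * (4 * h + q * a2 + q * a1 + q * a2 + P * a1 * a2) := by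
    rw [k1, k2, ha1, ha2]
    ring
  linear_combination main + (4 * h + q * a2 + q * a1 + q * a2 + P * a1 * a2 + q * q1 * q2) * hP +
    P * k2

lemma alg1 {B : Type*} [CommRing B] (P q d h r1 r2 z1 z2 q1 q2 : B)
    (h1 : q1 = q + P * d + P ^ 2 * h + P ^ 3 * r1)
    (h2 : q2 = q + 2 * P * d + 4 * P ^ 2 * h + P ^ 3 * r2) (hP : P ^ 2 = 0) :
    (1 + P ^ 3 * z1) * (1 + P ^ 3 * z2) * ((1 + P * q) * (1 + P * q1) * (1 + P * q2)) - 1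
    = P * (3 * q) := by
  have h3 : P ^ 3 = 0 := by rw [pow_succ, hP, zero_mul]
  rw [h3, hP] at h1 h2
  rw [h3]
  simp only [zero_mul, add_zero, mul_one, one_mul, mul_zero] at h1 h2 ⊢
  linear_combination P * h1 + P * h2 + (q * q1 + q * q2 + q1 * q2 + P * q * q1 * q2 + 3 * d) * hP

/-- parity of products -/
lemma odd_coeff_mul {F : Type*} [CommRing F] (M : ℕ) (f g : F[X])
    (hf : ∀ r, Odd r → r ≤ M → f.coeff r = 0) (hg : ∀ r, Odd r → r ≤ M → g.coeff r = 0) :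
    ∀ r, Odd r → r ≤ M → (f * g).coeff r = 0 := by
  intro r hr hrM
  rw [coeff_mul]
  apply Finset.sum_eq_zero
  intro x hx
  have hx' := Finset.HasAntidiagonal.mem_antidiagonal.1 hx
  rcases Nat.even_or_odd x.1 with h | h
  · have : Odd x.2 := by
      rw [← hx'] at hr
      exact (Nat.odd_add'.1 hr).2 h
    rw [hg _ this (by omega), mul_zero]
  · rw [hf _ h (by omega), zero_mul]

variable (p : ℕ) [hp : Fact p.Prime]

lemma total_cong (n : ℕ) (hn : Even n) (hn2 : 2 ≤ n) (hnp : n + 3 ≤ p) (q Q0 Q1 Q2 : ℤ_[p][X]) (c z1 z2 : ℤ_[p])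
    (hQ0 : Q0 = 1 + C (p : ℤ_[p]) * q + C c * X ^ (p - 1))
    (hQ1 : Q1 = Q0.comp (X + C (p : ℤ_[p]))) (hQ2 : Q2 = Q0.comp (X + C (2 * (p : ℤ_[p]))))
    (hodd : ∀ r, Odd r → r + 4 ≤ p → PadicInt.toZMod (q.coeff r) = 0) :
    ∃ y : ℤ_[p], (X ^ 3 * (C (1 + p ^ 3 * z1) * C (1 + p ^ 3 * z2) * (Q0 * Q1 * Q2) - 3 * (C (1 + p ^ 3 * z1) * (Q0 * Q1))
        + 3 * Q0 - 1)
      + 3 * C (p : ℤ_[p]) * X ^ 2 * (C (1 + p ^ 3 * z1) * C (1 + p ^ 3 * z2) * (Q0 * Q1 * Q2) - C (1 + p ^ 3 * z1) * (Q0 * Q1)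
        - Q0 + 1)
      + 2 * C (p : ℤ_[p]) ^ 2 * X * (C (1 + p ^ 3 * z1) * C (1 + p ^ 3 * z2) * (Q0 * Q1 * Q2) - 1)).coeff n = p ^ 3 * y ∧
      2 * PadicInt.toZMod y = (3 * n + 6) * PadicInt.toZMod ((q ^ 2).coeff (n - 2)) := by
  obtain ⟨h, hh, ht⟩ := taylor2 q
  obtain ⟨r1, hr1⟩ := ht p
  obtain ⟨r2, hr2⟩ := ht (2 * p)
  obtain ⟨P, hP⟩ : ∃ P : ℤ_[p][X], P = C (p : ℤ_[p]) := ⟨_, rfl⟩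
  have e2p : C (2 * (p : ℤ_[p])) = 2 * P := by rw [C_mul, hP]; rfl
  have eν : ∀ z : ℤ_[p], C (1 + p ^ 3 * z) = 1 + P ^ 3 * C z := by intro z; simp [hP]
  rw [e2p] at hr2
  rw [← hP] at hr1
  generalize hq1 : q.comp (X + P) = q1 at *
  generalize hq2 : q.comp (X + 2 * P) = q2 at *
  have t1 : q1 = q + P * derivative q + P ^ 2 * h + P ^ 3 * r1 := hr1
  have t2 : q2 = q + 2 * P * derivative q + 4 * P ^ 2 * h + P ^ 3 * (8 * r2) := by rw [hr2]; ring
  have f0 : Q0 = 1 + P * q + C c * (X + 0) ^ (p - 1) := by rw [hQ0, hP, add_zero]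
  have f1 : Q1 = 1 + P * q1 + C c * (X + P) ^ (p - 1) := by
    rw [hQ1, hQ0, ← hq1, hP]; simp
  have f2 : Q2 = 1 + P * q2 + C c * (X + 2 * P) ^ (p - 1) := by
    rw [hQ2, hQ0, ← hq2, e2p, hP]; simp
  simp only [eν, ← hP]
  clear hQ1 hQ2
  -- the congruences
  have step : ∀ b, b + 1 ≤ p → ∀ k : ℤ_[p][X],
      Ideal.Quotient.mk (Ideal.span {P ^ (b + 1), (X : ℤ_[p][X]) ^ (p - 1 - b)}) (C c * (X + k * P) ^ (p - 1)) = 0 := by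
    intro b hb k
    rw [Ideal.Quotient.eq_zero_iff_mem]
    apply Ideal.mul_mem_left
    have := add_pow_mem_span (X : ℤ_[p][X]) (k * P) (p - 1 - b) b
    rw [show p - 1 - b + b = p - 1 by omega] at this
    refine Ideal.span_le.2 ?_ this
    rintro x (rfl | rfl)
    · rw [mul_pow]
      exact Ideal.mul_mem_left _ _ (Ideal.subset_span (by simp))
    · exact Ideal.subset_span (by simp)
  have stepP : ∀ b, (Ideal.Quotient.mk (Ideal.span {P ^ (b + 1), (X : ℤ_[p][X]) ^ (p - 1 - b)}) P) ^ (b + 1) = 0 := by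
    intro b
    rw [← map_pow, Ideal.Quotient.eq_zero_iff_mem]
    exact Ideal.subset_span (by simp)
  have g : ∀ b, b + 1 ≤ p → 
      let π := Ideal.Quotient.mk (Ideal.span {P ^ (b + 1), (X : ℤ_[p][X]) ^ (p - 1 - b)})
      π Q0 = 1 + π P * π q ∧ π Q1 = 1 + π P * π q1 ∧ π Q2 = 1 + π P * π q2 ∧
      π q1 = π q + π P * π (derivative q) + π P ^ 2 * π h + π P ^ 3 * π r1 ∧
      π q2 = π q + 2 * π P * π (derivative q) + 4 * π P ^ 2 * π h + π P ^ 3 * π (8 * r2) := by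
    intro b hb π
    have s0 := step b hb 0
    have s1 := step b hb 1
    have s2 := step b hb 2
    rw [zero_mul] at s0
    rw [one_mul] at s1
    refine ⟨?_, ?_, ?_, ?_, ?_⟩
    · rw [f0, map_add, s0]; simp
    · rw [f1, map_add, s1]; simp
    · rw [f2, map_add, s2]; simp
    · rw [t1]; simp only [map_add, map_mul, map_pow]
    · rw [t2]; simp only [map_add, map_mul, map_pow, map_ofNat]
  have G3 : (1 + P ^ 3 * C z1) * (1 + P ^ 3 * C z2) * (Q0 * Q1 * Q2) - 3 * ((1 + P ^ 3 * C z1) * (Q0 * Q1))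
        + 3 * Q0 - 1 - P ^ 3 * (2 * h + 3 * (q * derivative q) + q ^ 3 + (C z2 - 2 * C z1)) ∈
        Ideal.span {P ^ (3 + 1), (X : ℤ_[p][X]) ^ (p - 1 - 3)} := by
    obtain ⟨a0, a1, a2, a3, a4⟩ := g 3 (by omega)
    have := alg3 _ _ _ _ _ _ (Ideal.Quotient.mk _ (C z1)) (Ideal.Quotient.mk _ (C z2)) _ _ a3 a4 (stepP 3)
    rw [← Ideal.Quotient.eq_zero_iff_mem, map_sub, sub_eq_zero]
    simp only [map_add, map_sub, map_mul, map_pow, map_one, map_ofNat, a0, a1, a2]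
    exact this
  have G2 : (1 + P ^ 3 * C z1) * (1 + P ^ 3 * C z2) * (Q0 * Q1 * Q2) - (1 + P ^ 3 * C z1) * (Q0 * Q1)
        - Q0 + 1 - P ^ 2 * (2 * (derivative q + q ^ 2)) ∈
        Ideal.span {P ^ (2 + 1), (X : ℤ_[p][X]) ^ (p - 1 - 2)} := by
    obtain ⟨a0, a1, a2, a3, a4⟩ := g 2 (by omega)
    have := alg2 _ _ _ _ _ _ (Ideal.Quotient.mk _ (C z1)) (Ideal.Quotient.mk _ (C z2)) _ _ a3 a4 (stepP 2)
    rw [← Ideal.Quotient.eq_zero_iff_mem, map_sub, sub_eq_zero]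
    simp only [map_add, map_sub, map_mul, map_pow, map_one, map_ofNat, a0, a1, a2]
    exact this
  have G1 : (1 + P ^ 3 * C z1) * (1 + P ^ 3 * C z2) * (Q0 * Q1 * Q2) - 1 - P * (3 * q) ∈
        Ideal.span {P ^ (1 + 1), (X : ℤ_[p][X]) ^ (p - 1 - 1)} := by
    obtain ⟨a0, a1, a2, a3, a4⟩ := g 1 (by omega)
    have := alg1 _ _ _ _ _ _ (Ideal.Quotient.mk _ (C z1)) (Ideal.Quotient.mk _ (C z2)) _ _ a3 a4 (stepP 1)
    rw [← Ideal.Quotient.eq_zero_iff_mem, map_sub, sub_eq_zero]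
    simp only [map_add, map_sub, map_mul, map_pow, map_one, map_ofNat, a0, a1, a2]
    exact this
  generalize (1 + P ^ 3 * C z1) * (1 + P ^ 3 * C z2) * (Q0 * Q1 * Q2) - 3 * ((1 + P ^ 3 * C z1) * (Q0 * Q1))
        + 3 * Q0 - 1 = F1 at *
  generalize (1 + P ^ 3 * C z1) * (1 + P ^ 3 * C z2) * (Q0 * Q1 * Q2) - (1 + P ^ 3 * C z1) * (Q0 * Q1)
        - Q0 + 1 = F2 at *
  generalize (1 + P ^ 3 * C z1) * (1 + P ^ 3 * C z2) * (Q0 * Q1 * Q2) - 1 = F3 at *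
  rw [hP] at G1 G2 G3
  have H3 := fun m hm => coeff_dvd_of_mem _ _ _ m hm _ G3
  obtain ⟨x2, hx2⟩ := coeff_dvd_of_mem _ _ _ (n - 2) (by omega) _ G2
  obtain ⟨x1, hx1⟩ := coeff_dvd_of_mem _ _ _ (n - 1) (by omega) _ G1
  have hz : PadicInt.toZMod (p : ℤ_[p]) = 0 := by simp
  obtain ⟨k, rfl⟩ : ∃ k, n = k + 2 := ⟨n - 2, by omega⟩
  have hk : Even k := by
    rw [Nat.even_add] at hn; exact hn.2 (by decide)
  simp only [show k + 2 - 2 = k by omega, show k + 2 - 1 = k + 1 by omega] at *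
  have c2 : (3 * P * X ^ 2 * F2).coeff (k + 2) = 3 * p * F2.coeff k := by
    have : 3 * P * X ^ 2 * F2 = C (3 * (p : ℤ_[p])) * (F2 * X ^ 2) := by
      rw [C_mul, hP, show C (3 : ℤ_[p]) = 3 from rfl]; ring
    rw [this, coeff_C_mul, coeff_mul_X_pow]
  have c1 : (2 * P ^ 2 * X * F3).coeff (k + 2) = 2 * p ^ 2 * F3.coeff (k + 1) := by
    have : 2 * P ^ 2 * X * F3 = C (2 * (p : ℤ_[p]) ^ 2) * (F3 * X) := by
      rw [C_mul, C_pow, hP, show C (2 : ℤ_[p]) = 2 from rfl]; ring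
    rw [this, coeff_C_mul, coeff_mul_X]
  have ofn : ∀ (t : ℕ) (f : ℤ_[p][X]) (m : ℕ), ((t : ℤ_[p][X]) * f).coeff m = t * f.coeff m := by
    intro t f m
    rw [← C_eq_natCast, coeff_C_mul]
  have of2 := ofn 2
  have of3 := ofn 3
  simp only [Nat.cast_ofNat] at of2 of3
  rw [coeff_sub, ← C_pow, coeff_C_mul, of2, coeff_add, coeff_derivative] at hx2
  rw [coeff_sub, coeff_C_mul, of3] at hx1
  have q0 : PadicInt.toZMod (q.coeff (k + 1)) = 0 := hodd _ hk.add_one (by omega)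
  have hsq : derivative (q ^ 2) = 2 * (q * derivative q) := by
    rw [pow_two, derivative_mul]; ring
  rw [coeff_add, coeff_add, c2, c1]
  have tz : ∀ t : ℕ, PadicInt.toZMod (t : ℤ_[p]) = (t : ZMod p) := fun t => map_natCast _ t
  rcases Nat.eq_zero_or_pos k with rfl | hk0
  · have c3 : (X ^ 3 * F1).coeff (0 + 2) = 0 := by
      rw [coeff_X_pow_mul', if_neg (by omega)]
    rw [c3]
    refine ⟨6 * (q.coeff 1 + (q ^ 2).coeff 0) + 3 * p * x2 + 6 * q.coeff 1 + 2 * p * x1, ?_, ?_⟩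
    · simp only [Nat.cast_zero, zero_add, mul_one] at hx1 hx2 ⊢
      linear_combination 3 * (p : ℤ_[p]) * hx2 + 2 * (p : ℤ_[p]) ^ 2 * hx1
    · simp only [zero_add] at q0
      simp only [map_add, map_mul, map_ofNat, hz, q0]
      push_cast
      ring
  · obtain ⟨j, rfl⟩ : ∃ j, k = j + 1 := ⟨k - 1, by omega⟩
    have hj : Odd j := by
      rcases Nat.even_or_odd j with h | h
      · exact absurd hk (by simpa using h.add_one)
      · exact h
    have hj1 : 1 ≤ j := hj.pos
    have c3 : (X ^ 3 * F1).coeff (j + 1 + 2) = F1.coeff j := by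
      rw [show j + 1 + 2 = j + 3 by omega, coeff_X_pow_mul]
    rw [c3]
    obtain ⟨x3, hx3⟩ := H3 j (by omega)
    have cz : (C z2 - 2 * C z1).coeff j = 0 := by
      rw [coeff_sub, of2, coeff_C, coeff_C, if_neg (by omega), if_neg (by omega)]; simp
    rw [coeff_sub, ← C_pow, coeff_C_mul, coeff_add, coeff_add, coeff_add, cz, of3, hh,
      coeff_derivative, coeff_derivative] at hx3
    have hs := congrArg (fun f => f.coeff j) hsq
    simp only [of2, coeff_derivative] at hs
    have q3 : PadicInt.toZMod ((q ^ 3).coeff j) = 0 := by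
      have hm : ∀ r, Odd r → r ≤ p - 4 → (q.map (PadicInt.toZMod (p := p))).coeff r = 0 := by
        intro r hr hr2
        rw [coeff_map]
        exact hodd r hr (by omega)
      have h2 := odd_coeff_mul (p - 4) _ _ hm hm
      have h3 := odd_coeff_mul (p - 4) _ _ h2 hm j hj (by omega)
      rw [← coeff_map, Polynomial.map_pow, pow_succ, pow_two]
      exact h3
    refine ⟨q.coeff (j + 1 + 1) * (((j + 1 : ℕ) : ℤ_[p]) + 1) * ((j : ℤ_[p]) + 1) + 3 * (q * derivative q).coeff j + (q ^ 3).coeff j + p * x3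
      + 6 * (q.coeff (j + 1 + 1) * (((j + 1 : ℕ) : ℤ_[p]) + 1) + (q ^ 2).coeff (j + 1)) + 3 * p * x2 + 6 * q.coeff (j + 1 + 1) + 2 * p * x1, ?_, ?_⟩
    · linear_combination hx3 + 3 * (p : ℤ_[p]) * hx2 + 2 * (p : ℤ_[p]) ^ 2 * hx1
    · have hs2 := congrArg (PadicInt.toZMod (p := p)) hs
      simp only [map_add, map_mul, map_ofNat, map_one, tz] at hs2
      simp only [map_add, map_mul, map_ofNat, hz, q0, q3]
      push_cast at hs2 ⊢
      linear_combination -3 * hs2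
end PartD
section PartE
open Polynomial

lemma Rpol_comp (p : ℕ) (A : Type*) [CommRing A] (m : ℕ) :
    Rpol A p m = (Rpol A p 0).comp (X + C ((p : A) * m)) := by
  unfold Rpol
  rw [prod_comp]
  apply Finset.prod_congr rfl
  intro i _
  rw [add_comp, X_comp, C_comp, add_assoc X, ← C_add]
  congr 2
  push_cast
  ring

lemma wnum_eval (p : ℕ) (A : Type*) [CommRing A] (m : ℕ) :
    (wnum p m : A) = (Rpol A p 0).eval ((p : A) * m) := by
  unfold Rpol wnum
  rw [eval_prod]
  push_cast
  apply Finset.prod_congr rfl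
  intro i _
  simp
  ring

lemma Rpol_map {A B : Type*} [CommRing A] [CommRing B] (f : A →+* B) (p m : ℕ) :
    (Rpol A p m).map f = Rpol B p m := by
  unfold Rpol
  rw [Polynomial.map_prod]
  apply Finset.prod_congr rfl
  intro i _
  rw [Polynomial.map_add, map_X, map_C, map_natCast]

lemma wnum_zero (p : ℕ) : wnum p 0 = (p - 1).factorial := by
  unfold wnum
  rw [← Finset.prod_range_add_one_eq_factorial]
  simp

variable (p : ℕ) [hp : Fact p.Prime]

lemma exists_q (hp5 : 5 ≤ p) (β : ℕ → ℤ_[p])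
    (hβ : ∀ k, k + 2 ≤ p → ((β k : ℤ_[p]) : ℚ_[p]) = ((_root_.bernoulli k : ℚ) : ℚ_[p])) :
    ∃ (u c : ℤ_[p]) (q : ℤ_[p][X]), u * (wnum p 0 : ℤ_[p]) = 1 ∧
      C u * Rpol ℤ_[p] p 0 = 1 + C (p : ℤ_[p]) * q + C c * X ^ (p - 1) ∧
      q.coeff 0 = 0 ∧
      ∀ r, 1 ≤ r → r + 2 ≤ p → ((r : ZMod p) + 1) * PadicInt.toZMod (q.coeff r) =
        - ((-1) ^ (p - 1 - r) * PadicInt.toZMod (β (p - 1 - r))) := by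
  have hp0 : (p : ℤ_[p]) ≠ 0 := by exact_mod_cast hp.out.ne_zero
  have hw : IsUnit (wnum p 0 : ℤ_[p]) := by
    unfold wnum
    push_cast
    rw [IsUnit.prod_iff]
    intro i hi
    have := Finset.mem_range.1 hi
    have h := natCast_isUnit p (i + 1) (by omega) (by omega)
    push_cast at h
    simpa using h
  obtain ⟨u, hu⟩ := hw.exists_left_inv
  obtain ⟨b, hb⟩ := exists_b p β hβ
  have ht : ∀ r, ∃ t : ℤ_[p], 1 ≤ r → r + 2 ≤ p → (Rpol ℤ_[p] p 0).coeff r = p * t := by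
    intro r
    by_cases h : 1 ≤ r ∧ r + 2 ≤ p
    · obtain ⟨t, ht⟩ := s_dvd p (p - 1 - r) (by omega) (by omega)
      refine ⟨t, fun _ _ => ?_⟩
      rw [← ht, show p - (p - 1 - r) = r + 1 by omega, coeff_X_mul]
    · exact ⟨0, fun h1 h2 => absurd ⟨h1, h2⟩ h⟩
  choose t ht using ht
  have hqc : ∀ m, (∑ r ∈ Finset.range (p - 1), C (if r = 0 then 0 else u * t r) * X ^ r : ℤ_[p][X]).coeff m =
      if m < p - 1 then (if m = 0 then 0 else u * t m) else 0 := by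
    intro m
    rw [finsetSum_coeff]
    simp only [coeff_C_mul_X_pow]
    rw [Finset.sum_ite_eq]
    simp
  refine ⟨u, u, ∑ r ∈ Finset.range (p - 1), C (if r = 0 then 0 else u * t r) * X ^ r, hu, ?_, ?_, ?_⟩
  · ext m
    rw [coeff_add, coeff_add, coeff_C_mul, coeff_C_mul, hqc, coeff_one, coeff_C_mul_X_pow]
    obtain ⟨hm, hd⟩ := Rpol_monic_deg p ℤ_[p] 0
    rcases Nat.eq_zero_or_pos m with rfl | h0
    · have := wnum_eval p ℤ_[p] 0
      rw [Nat.cast_zero, mul_zero, ← coeff_zero_eq_eval_zero] at this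
      have h3 : (0 : ℕ) ≠ p - 1 := by omega
      rw [← this, hu, if_neg h3]
      simp
    · rcases lt_trichotomy m (p - 1) with h | h | h
      · rw [ht m h0 (by omega), if_neg (by omega), if_pos h, if_neg (by omega), if_neg (by omega)]
        ring
      · have h1 : (Rpol ℤ_[p] p 0).coeff m = 1 := by
          rw [h, ← hd]; exact hm
        rw [h1, if_neg (by omega), if_neg (by omega), if_pos h]
        ring
      · rw [coeff_eq_zero_of_natDegree_lt (by omega), if_neg (by omega), if_neg (by omega), if_neg (by omega)]
        ring
  · rw [hqc]; simp
  · intro r h1 h2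
    rw [hqc, if_pos (by omega), if_neg (by omega)]
    obtain ⟨e1, e2⟩ := hb (p - 1 - r) (by omega)
    rw [show p - (p - 1 - r) = r + 1 by omega, coeff_X_mul, ht r h1 h2] at e1
    have e3 : b (p - 1 - r) = ((r + 1 : ℕ) : ℤ_[p]) * t r := by
      apply mul_left_cancel₀ hp0
      rw [e1]; ring
    rw [e3] at e2
    have uw := congrArg (PadicInt.toZMod (p := p)) hu
    rw [map_mul, map_natCast, wnum_zero, ZMod.wilsons_lemma, map_one] at uw
    rw [← e2, map_mul, map_mul, map_natCast]
    push_cast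
    linear_combination (-((r : ZMod p) + 1) * PadicInt.toZMod (t r)) * uw

lemma dvd_of_toZMod (x : ℤ_[p]) (h : PadicInt.toZMod x = 0) : ∃ e, x = p * e := by
  have : x ∈ RingHom.ker (PadicInt.toZMod (p := p)) := h
  rw [PadicInt.ker_toZMod, PadicInt.maximalIdeal_eq_span_p, Ideal.mem_span_singleton] at this
  exact this

lemma Spol_eq (hp5 : 5 ≤ p) (u c : ℤ_[p]) (q : ℤ_[p][X]) (hu : u * (wnum p 0 : ℤ_[p]) = 1)
    (hQ : C u * Rpol ℤ_[p] p 0 = 1 + C (p : ℤ_[p]) * q + C c * X ^ (p - 1))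
    (hq0 : q.coeff 0 = 0) (hq1 : PadicInt.toZMod (q.coeff 1) = 0) (m : ℕ) :
    ∃ z : ℤ_[p], Spol ℚ_[p] p m = (C (1 + (p : ℤ_[p]) ^ 3 * z) *
      (C u * Rpol ℤ_[p] p 0).comp (X + C ((p : ℤ_[p]) * m))).map PadicInt.Coe.ringHom := by
  obtain ⟨e1, he1⟩ := dvd_of_toZMod p _ hq1
  have hs : ∃ s, u * (wnum p m : ℤ_[p]) = 1 + p ^ 3 * s := by
    have h1 : u * (wnum p m : ℤ_[p]) = (C u * Rpol ℤ_[p] p 0).eval ((p : ℤ_[p]) * m) := by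
      rw [wnum_eval, eval_mul, eval_C]
    rw [h1, hQ]
    have hq : q = X * (X * q.divX.divX + C (q.coeff 1)) := by
      have a1 := divX_mul_X_add q
      have a2 := divX_mul_X_add q.divX
      rw [hq0, C_0, add_zero] at a1
      rw [coeff_divX, zero_add] at a2
      rw [mul_comm X q.divX.divX, a2, mul_comm, a1]
    have hq' : q.eval ((p : ℤ_[p]) * m) = (p * m) * ((p * m) * q.divX.divX.eval ((p : ℤ_[p]) * m) + p * e1) := by
      conv_lhs => rw [hq]
      rw [eval_mul, eval_add, eval_mul, eval_X, eval_C, he1]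
    obtain ⟨d, hd⟩ : ∃ d, p - 1 = 3 + d := ⟨p - 4, by omega⟩
    refine ⟨m * (m * q.divX.divX.eval ((p : ℤ_[p]) * m) + e1) + c * m ^ 3 * (p * m) ^ d, ?_⟩
    rw [eval_add, eval_add, eval_mul, eval_mul, eval_C, eval_C, eval_one, eval_pow, eval_X, hq', hd, pow_add]
    ring
  obtain ⟨s, hs⟩ := hs
  have hunit : IsUnit (1 + (p : ℤ_[p]) ^ 3 * s) := by
    by_contra hc
    have h2 : (1 + (p : ℤ_[p]) ^ 3 * s) ∈ IsLocalRing.maximalIdeal ℤ_[p] := hc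
    rw [← PadicInt.ker_toZMod, RingHom.mem_ker] at h2
    simp at h2
  obtain ⟨v, hv⟩ := hunit.exists_left_inv
  refine ⟨- s * v, ?_⟩
  have e : 1 + (p : ℤ_[p]) ^ 3 * (- s * v) = v := by linear_combination -hv
  rw [e, mul_comp, C_comp, ← Rpol_comp, Polynomial.map_mul, Polynomial.map_mul, Rpol_map, map_C, map_C, ← mul_assoc, ← C_mul, ← map_mul]
  unfold Spol
  congr 2
  rw [← hs] at hv
  have hv' := congrArg (PadicInt.Coe.ringHom (p := p)) hv
  rw [← mul_assoc, map_mul, map_natCast, map_one] at hv'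
  have : (wnum p m : ℚ_[p]) ≠ 0 := by exact_mod_cast wnum_ne_zero p m
  rw [eq_comm, eq_div_iff this]
  exact hv'

lemma hsum_y (n : ℕ) (hn : Even n) (hn2 : 2 ≤ n) (hnp : n + 3 ≤ p) (u c : ℤ_[p]) (q : ℤ_[p][X])
    (hu : u * (wnum p 0 : ℤ_[p]) = 1)
    (hQ : C u * Rpol ℤ_[p] p 0 = 1 + C (p : ℤ_[p]) * q + C c * X ^ (p - 1))
    (hq0 : q.coeff 0 = 0)
    (hodd : ∀ r, Odd r → r + 4 ≤ p → PadicInt.toZMod (q.coeff r) = 0) :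
    ∃ y : ℤ_[p], 6 * ((hsum p n (3 * p) : ℚ) : ℚ_[p]) = (n.factorial : ℚ_[p]) * (y : ℚ_[p]) ∧
      2 * PadicInt.toZMod y = (3 * n + 6) * PadicInt.toZMod ((q ^ 2).coeff (n - 2)) := by
  have hp5 : 5 ≤ p := by omega
  have hq1 := hodd 1 (by decide) (by omega)
  obtain ⟨z1, hz1⟩ := Spol_eq p hp5 u c q hu hQ hq0 hq1 1
  obtain ⟨z2, hz2⟩ := Spol_eq p hp5 u c q hu hQ hq0 hq1 2
  have hz0 : Spol ℚ_[p] p 0 = (C u * Rpol ℤ_[p] p 0).map PadicInt.Coe.ringHom := by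
    rw [Polynomial.map_mul, Rpol_map, map_C]
    unfold Spol
    congr 2
    have hv' := congrArg (PadicInt.Coe.ringHom (p := p)) hu
    rw [map_mul, map_natCast, map_one] at hv'
    have : (wnum p 0 : ℚ_[p]) ≠ 0 := by exact_mod_cast wnum_ne_zero p 0
    rw [eq_comm, eq_div_iff this]
    exact hv'
  obtain ⟨y, hy, hy2⟩ := total_cong p n hn hn2 hnp q (C u * Rpol ℤ_[p] p 0) _ _ c z1 z2 hQ rfl rfl hodd
  refine ⟨y, ?_, hy2⟩
  rw [Nat.cast_one, mul_one] at hz1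
  rw [Nat.cast_ofNat, mul_comm (p : ℤ_[p]) 2] at hz2
  have hU := UV_three (K := ℚ_[p]) p hp.out.ne_zero
  have hp0 : (p : ℚ_[p]) ≠ 0 := by exact_mod_cast hp.out.ne_zero
  have hmap := congrArg (PadicInt.Coe.ringHom (p := p)) hy
  rw [← coeff_map] at hmap
  have e3 : PadicInt.Coe.ringHom ((p : ℤ_[p]) ^ 3 * y) = (p : ℚ_[p]) ^ 3 * (y : ℚ_[p]) := by
    rw [map_mul, map_pow, map_natCast]; rfl
  have e4 : (C (p : ℤ_[p])).map (PadicInt.Coe.ringHom (p := p)) = C (p : ℚ_[p]) := by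
    rw [map_C, map_natCast]
  rw [e3] at hmap
  clear hy hy2
  rw [Polynomial.map_mul] at hz1 hz2
  generalize C u * Rpol ℤ_[p] p 0 = Q0 at *
  generalize Q0.comp (X + C (p : ℤ_[p])) = Q1 at *
  generalize Q0.comp (X + C (2 * (p : ℤ_[p]))) = Q2 at *
  generalize C (1 + (p : ℤ_[p]) ^ 3 * z1) = N1 at *
  generalize C (1 + (p : ℤ_[p]) ^ 3 * z2) = N2 at *
  generalize C (p : ℤ_[p]) = P at *
  simp only [Polynomial.map_add, Polynomial.map_sub, Polynomial.map_mul, Polynomial.map_pow, map_X,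
    Polynomial.map_one, Polynomial.map_ofNat] at hmap
  have key : 6 * (p : ℚ_[p]) ^ 3 * (PowerSeries.coeff (p * 3) (User ℚ_[p] * Vser ℚ_[p] p)).coeff n =
      (p : ℚ_[p]) ^ 3 * (y : ℚ_[p]) := by
    rw [← hmap, ← coeff_C_mul, hU, hz0, hz1, hz2, e4]
    generalize Q0.map (PadicInt.Coe.ringHom (p := p)) = a0
    generalize Q1.map (PadicInt.Coe.ringHom (p := p)) = a1
    generalize Q2.map (PadicInt.Coe.ringHom (p := p)) = a2
    generalize N1.map (PadicInt.Coe.ringHom (p := p)) = a3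
    generalize N2.map (PadicInt.Coe.ringHom (p := p)) = a4
    refine congrArg (fun f => Polynomial.coeff f n) ?_
    ring
  rw [mul_comm 3 p, hsum_eq_UV (K := ℚ_[p]) p hp.out.ne_zero n]
  have : 6 * (PowerSeries.coeff (p * 3) (User ℚ_[p] * Vser ℚ_[p] p)).coeff n = (y : ℚ_[p]) := by
    apply mul_left_cancel₀ (pow_ne_zero 3 hp0)
    rw [← key]; ring
  rw [← this]; ring

end PartE
section PartF
open Polynomial

/-- the conclusion from a `p`-adic identity -/
lemma ratCong_of_padic (p : ℕ) [hp : Fact p.Prime] (hp5 : 5 ≤ p) (x y : ℚ) (e : ℤ_[p])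
    (h : 12 * ((x : ℚ_[p]) - (y : ℚ_[p])) = p * (e : ℚ_[p])) : ratCong p 1 x y := by
  have hp0 : (p : ℚ) ≠ 0 := by exact_mod_cast hp.out.ne_zero
  have hp0' : (p : ℚ_[p]) ≠ 0 := by exact_mod_cast hp.out.ne_zero
  refine ⟨(x - y) / p, by field_simp, ?_⟩
  generalize hz : (x - y) / p = z
  have hz' : 12 * (z : ℚ_[p]) = (e : ℚ_[p]) := by
    rw [← hz]
    push_cast
    rw [← mul_div_assoc, h, mul_div_cancel_left₀ _ hp0']
  have h12 : ‖(12 : ℚ_[p])‖ = 1 := by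
    have h2 : ‖((12 : ℕ) : ℤ_[p])‖ = 1 := by
      rw [PadicInt.norm_natCast_eq_one_iff]
      have a : Nat.Coprime p 2 := (Nat.coprime_of_lt_prime (by omega) (by omega) hp.out)
      have b : Nat.Coprime p 3 := (Nat.coprime_of_lt_prime (by omega) (by omega) hp.out)
      have : Nat.Coprime p (2 * (2 * 3)) := (a.mul_right (a.mul_right b))
      exact this
    rw [PadicInt.norm_def, PadicInt.coe_natCast] at h2
    simpa only [Nat.cast_ofNat] using h2
  have hn : ‖(z : ℚ_[p])‖ ≤ 1 := by
    have := congrArg norm hz'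
    rw [norm_mul, h12, one_mul] at this
    rw [this]
    exact e.2
  have hu := PadicInt.isUnit_den z hn
  rw [PadicInt.isUnit_iff, PadicInt.norm_natCast_eq_one_iff] at hu
  intro hd
  exact hp.out.one_lt.ne' (Nat.eq_one_of_dvd_coprimes hu dvd_rfl hd)

lemma sum_sym {F : Type*} [CommRing F] (n : ℕ) (hn : Even n) (t : ℕ → F)
    (ht : ∀ a ∈ (Finset.Icc 2 (n - 2)).filter (fun a => Odd a), t a = t (n - a)) :
    ∑ a ∈ (Finset.Icc 2 (n - 2)).filter (fun a => Odd a), 2 * (2 * (n : F) - a + 3) * t a =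
      (3 * n + 6) * ∑ a ∈ (Finset.Icc 2 (n - 2)).filter (fun a => Odd a), t a := by
  have hm : ∀ a ∈ (Finset.Icc 2 (n - 2)).filter (fun a => Odd a),
      n - a ∈ (Finset.Icc 2 (n - 2)).filter (fun a => Odd a) := by
    intro a ha
    rw [Finset.mem_filter, Finset.mem_Icc] at ha ⊢
    refine ⟨⟨by omega, by omega⟩, ?_⟩
    exact Nat.Even.sub_odd (by omega) hn ha.2
  have h1 : ∑ a ∈ (Finset.Icc 2 (n - 2)).filter (fun a => Odd a), (2 * (n : F) - a + 3) * t a =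
      ∑ a ∈ (Finset.Icc 2 (n - 2)).filter (fun a => Odd a), ((n : F) + a + 3) * t a := by
    refine Finset.sum_nbij' (fun a => n - a) (fun a => n - a) hm hm ?_ ?_ ?_
    · intro a ha
      rw [Finset.mem_filter, Finset.mem_Icc] at ha
      omega
    · intro a ha
      rw [Finset.mem_filter, Finset.mem_Icc] at ha
      omega
    · intro a ha
      have h := ht a ha
      rw [Finset.mem_filter, Finset.mem_Icc] at ha
      rw [← h, Nat.cast_sub (by omega)]
      ring
  have h2 : ∀ f : ℕ → F, ∑ a ∈ (Finset.Icc 2 (n - 2)).filter (fun a => Odd a), 2 * f a * t a =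
      2 * ∑ a ∈ (Finset.Icc 2 (n - 2)).filter (fun a => Odd a), f a * t a := by
    intro f
    rw [Finset.mul_sum]
    exact Finset.sum_congr rfl fun a _ => by ring
  rw [h2, two_mul]
  nth_rewrite 2 [h1]
  rw [← Finset.sum_add_distrib, Finset.mul_sum]
  exact Finset.sum_congr rfl fun a _ => by ring

lemma coeff_sq_sum (p : ℕ) [hp : Fact p.Prime] (n : ℕ) (hn : Even n) (hn2 : 2 ≤ n) (hnp : n + 3 ≤ p)
    (q : ℤ_[p][X]) (hq0 : q.coeff 0 = 0)
    (hodd : ∀ r, Odd r → r + 4 ≤ p → PadicInt.toZMod (q.coeff r) = 0) :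
    PadicInt.toZMod ((q ^ 2).coeff (n - 2)) =
      ∑ a ∈ (Finset.Icc 2 (n - 2)).filter (fun a => Odd a),
        PadicInt.toZMod (q.coeff (a - 1)) * PadicInt.toZMod (q.coeff (n - a - 1)) := by
  rw [pow_two, coeff_mul, Finset.Nat.sum_antidiagonal_eq_sum_range_succ_mk, map_sum]
  have h1 := Finset.sum_Ico_eq_sum_range
    (fun a => PadicInt.toZMod (q.coeff (a - 1)) * PadicInt.toZMod (q.coeff (n - a - 1))) 1 n
  rw [show (n - 2).succ = n - 1 by omega]
  have h2 : ∑ x ∈ Finset.range (n - 1), PadicInt.toZMod (q.coeff x * q.coeff (n - 2 - x)) =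
      ∑ x ∈ Finset.range (n - 1), PadicInt.toZMod (q.coeff (1 + x - 1)) * PadicInt.toZMod (q.coeff (n - (1 + x) - 1)) := by
    apply Finset.sum_congr rfl
    intro x hx
    rw [map_mul, show 1 + x - 1 = x by omega, show n - (1 + x) - 1 = n - 2 - x by omega]
  rw [h2, ← h1]
  symm
  apply Finset.sum_subset
  · intro a ha
    rw [Finset.mem_filter, Finset.mem_Icc] at ha
    rw [Finset.mem_Ico]
    omega
  · intro a ha ha2
    rw [Finset.mem_Ico] at ha
    rw [Finset.mem_filter, Finset.mem_Icc, not_and] at ha2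
    rcases Nat.even_or_odd a with h | h
    · have : Odd (a - 1) := Nat.Even.sub_odd (by omega) h (by decide)
      rw [hodd _ this (by omega), zero_mul]
    · have h3 : ¬ (2 ≤ a ∧ a ≤ n - 2) := fun h4 => ha2 h4 h
      by_cases h5 : a = 1
      · rw [h5, hq0, map_zero, zero_mul]
      · rw [show n - a - 1 = 0 by omega, hq0, map_zero, mul_zero]

lemma hsum_zero (p : ℕ) (hp : p ≠ 0) : hsum p 0 (3 * p) = 0 := by
  unfold hsum
  rw [Finset.sum_eq_zero]
  intro l hl
  rw [Finset.mem_filter] at hl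
  have := hl.2.1
  simp at this
  omega

lemma main_pos (p n : ℕ) (hn : Even n) [hp : Fact p.Prime] (hnp : n + 3 ≤ p) (hn2 : 2 ≤ n) :
    ratCong p 1 (hsum p n (3 * p))
      ((Nat.factorial n : ℚ) / 6 *
        ∑ a ∈ (Finset.Icc 2 (n - 2)).filter (fun a => Odd a),
          (2 * (n : ℚ) - a + 3) * _root_.bernoulli (p - a) * _root_.bernoulli (p - n + a) /
            ((a : ℚ) * (n - a))) := by
  have hp5 : 5 ≤ p := by omega
  have hpo : Odd p := hp.out.odd_of_ne_two (by omega)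
  obtain ⟨β, hβ⟩ := exists_beta p
  obtain ⟨u, c, q, hu, hQ, hq0, hqr⟩ := exists_q p hp5 β hβ
  have hne : ∀ k : ℕ, 0 < k → k < p → (k : ZMod p) ≠ 0 := by
    intro k h0 hk hc
    rw [ZMod.natCast_eq_zero_iff] at hc
    exact absurd (Nat.le_of_dvd h0 hc) (by omega)
  have hodd : ∀ r, Odd r → r + 4 ≤ p → PadicInt.toZMod (q.coeff r) = 0 := by
    intro r hr hrp
    have hr1 := hr.pos
    have h := hqr r hr.pos (by omega)
    have hko : Odd (p - 1 - r) := Nat.Even.sub_odd (by omega) (Nat.Odd.sub_odd hpo (by decide)) hr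
    have hb : β (p - 1 - r) = 0 := by
      apply PadicInt.ext
      rw [hβ _ (by omega), bernoulli_eq_zero_of_odd hko (by omega)]
      simp
    rw [hb, map_zero, mul_zero, neg_zero] at h
    rcases mul_eq_zero.1 h with h | h
    · exact absurd h (by exact_mod_cast hne (r + 1) (by omega) (by omega))
    · exact h
  have hev : ∀ a, Odd a → 2 ≤ a → a + 2 ≤ p →
      (a : ZMod p) * PadicInt.toZMod (q.coeff (a - 1)) = - PadicInt.toZMod (β (p - a)) := by
    intro a ha h2 hap
    have h := hqr (a - 1) (by omega) (by omega)
    have hko : Even (p - a) := Nat.Odd.sub_odd hpo ha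
    rw [show p - 1 - (a - 1) = p - a by omega, hko.neg_one_pow, one_mul] at h
    rw [← h, Nat.cast_sub (by omega)]
    simp
  obtain ⟨y, hy, hy2⟩ := hsum_y p n hn hn2 hnp u c q hu hQ hq0 hodd
  rw [coeff_sq_sum p n hn hn2 hnp q hq0 hodd] at hy2
  have ht : ∀ a, ∃ t : ℤ_[p], a ∈ (Finset.Icc 2 (n - 2)).filter (fun a => Odd a) →
      ((t : ℚ_[p]) = (((_root_.bernoulli (p - a) * _root_.bernoulli (p - n + a) / ((a : ℚ) * (n - a)) : ℚ)) : ℚ_[p]) ∧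
      PadicInt.toZMod t = PadicInt.toZMod (q.coeff (a - 1)) * PadicInt.toZMod (q.coeff (n - a - 1))) := by
    intro a
    by_cases ha : a ∈ (Finset.Icc 2 (n - 2)).filter (fun a => Odd a)
    · have ha0 := ha
      rw [Finset.mem_filter, Finset.mem_Icc] at ha
      have hna : Odd (n - a) := Nat.Even.sub_odd (by omega) hn ha.2
      have u1 := natCast_isUnit p a (by omega) (by omega)
      have u2 := natCast_isUnit p (n - a) (by omega) (by omega)
      obtain ⟨i1, hi1⟩ := u1.exists_left_inv
      obtain ⟨i2, hi2⟩ := u2.exists_left_inv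
      refine ⟨β (p - a) * β (p - (n - a)) * (i1 * i2), fun _ => ⟨?_, ?_⟩⟩
      · have j1 := congrArg (fun x : ℤ_[p] => (x : ℚ_[p])) hi1
        have j2 := congrArg (fun x : ℤ_[p] => (x : ℚ_[p])) hi2
        simp only [PadicInt.coe_mul, PadicInt.coe_natCast, PadicInt.coe_one] at j1 j2
        rw [Nat.cast_sub (by omega)] at j2
        simp only [PadicInt.coe_mul]
        rw [hβ _ (by omega), hβ _ (by omega), show p - n + a = p - (n - a) by omega]
        push_cast
        have n1 : (a : ℚ_[p]) ≠ 0 := right_ne_zero_of_mul (j1.trans_ne one_ne_zero)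
        have n2 : (n : ℚ_[p]) - a ≠ 0 := right_ne_zero_of_mul (j2.trans_ne one_ne_zero)
        rw [eq_div_iff (mul_ne_zero n1 n2)]
        generalize (((_root_.bernoulli (p - a) : ℚ)) : ℚ_[p]) = b1
        generalize (((_root_.bernoulli (p - (n - a)) : ℚ)) : ℚ_[p]) = b2
        linear_combination b1 * b2 * (i2 : ℚ_[p]) * ((n : ℚ_[p]) - a) * j1 + b1 * b2 * j2
      · have k1 := congrArg (PadicInt.toZMod (p := p)) hi1
        have k2 := congrArg (PadicInt.toZMod (p := p)) hi2
        simp only [map_mul, map_natCast, map_one] at k1 k2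
        have e1 := hev a ha.2 (by omega) (by omega)
        have e2 := hev (n - a) hna (by omega) (by omega)
        simp only [map_mul]
        rw [← neg_neg (PadicInt.toZMod (β (p - a))), ← neg_neg (PadicInt.toZMod (β (p - (n - a)))), ← e1, ← e2]
        generalize PadicInt.toZMod (q.coeff (a - 1)) = g1 at *
        generalize PadicInt.toZMod (q.coeff (n - a - 1)) = g2 at *
        linear_combination g1 * g2 * (PadicInt.toZMod i2) * ((n - a : ℕ) : ZMod p) * k1 + g1 * g2 * k2
    · exact ⟨0, fun h => absurd h ha⟩
  choose t ht using ht
  have hs := sum_sym (F := ZMod p) n hn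
    (fun a => PadicInt.toZMod (q.coeff (a - 1)) * PadicInt.toZMod (q.coeff (n - a - 1))) (by
      intro a ha
      rw [Finset.mem_filter, Finset.mem_Icc] at ha
      rw [mul_comm, show n - (n - a) - 1 = a - 1 by omega])
  rw [← hs] at hy2
  obtain ⟨e, he⟩ := dvd_of_toZMod p
    (2 * y - ∑ a ∈ (Finset.Icc 2 (n - 2)).filter (fun a => Odd a), 2 * (2 * (n : ℤ_[p]) - a + 3) * t a) (by
      rw [map_sub, map_mul, map_ofNat, hy2, map_sum, sub_eq_zero]
      apply Finset.sum_congr rfl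
      intro a ha
      simp only [map_mul, map_add, map_sub, map_ofNat, map_natCast]
      rw [(ht a ha).2])
  apply ratCong_of_padic p hp5 _ _ ((n.factorial : ℤ_[p]) * e)
  have he' := congrArg (PadicInt.Coe.ringHom (p := p)) he
  simp only [map_mul, map_sub, map_add, map_ofNat, map_natCast, map_sum] at he'
  have hsum2 : ((∑ a ∈ (Finset.Icc 2 (n - 2)).filter (fun a => Odd a),
          (2 * (n : ℚ) - a + 3) * _root_.bernoulli (p - a) * _root_.bernoulli (p - n + a) /
            ((a : ℚ) * (n - a)) : ℚ) : ℚ_[p]) * 2 = ∑ a ∈ (Finset.Icc 2 (n - 2)).filter (fun a => Odd a),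
            2 * (2 * (n : ℚ_[p]) - a + 3) * PadicInt.Coe.ringHom (t a) := by
    rw [Rat.cast_sum, Finset.sum_mul]
    apply Finset.sum_congr rfl
    intro a ha
    have h := (ht a ha).1
    change _ = 2 * (2 * (n : ℚ_[p]) - a + 3) * (t a : ℚ_[p])
    rw [h]
    push_cast
    ring
  rw [← hsum2] at he'
  rw [Rat.cast_mul]
  generalize ((∑ a ∈ (Finset.Icc 2 (n - 2)).filter (fun a => Odd a),
          (2 * (n : ℚ) - a + 3) * _root_.bernoulli (p - a) * _root_.bernoulli (p - n + a) /
            ((a : ℚ) * (n - a)) : ℚ) : ℚ_[p]) = Z at *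
  change 2 * (y : ℚ_[p]) - Z * 2 = p * (e : ℚ_[p]) at he'
  push_cast
  linear_combination 2 * hy + (n.factorial : ℚ_[p]) * he'

end PartF

theorem stmt_10 (p n : ℕ) (hn : Even n) (hp : p.Prime) (hpn : n + 2 < p) :
    ratCong p 1 (hsum p n (3 * p))
      ((Nat.factorial n : ℚ) / 6 *
        ∑ a ∈ (Finset.Icc 2 (n - 2)).filter (fun a => Odd a),
          (2 * (n : ℚ) - a + 3) * bernoulli (p - a) * bernoulli (p - n + a) /
            ((a : ℚ) * (n - a))) := by
  have : Fact p.Prime := ⟨hp⟩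
  by_cases h2 : 2 ≤ n
  · exact main_pos p n hn (by omega) h2
  · have h0 : n = 0 := by
      obtain ⟨k, rfl⟩ := hn
      omega
    subst h0
    rw [hsum_zero p hp.ne_zero]
    refine ⟨0, by simp, by simpa using hp.one_lt.ne'⟩
end

section
/- Let n be an even integer and p > n+2 a prime. Then the sum of 1/(l_1⋯l_n) over all n-tuples of positive integers with l_1+⋯+l_n = 2p and each l_i < p is congruent modulo p to (n!/2)·Σ_{a odd, 3 ≤ a ≤ n-3} B_{p-a}·B_{p-n+a}/(a(n-a)). -/
/-- Sum of `1/(l₁⋯lₙ)` over positive `n`-tuples summing to `N` with each `lᵢ < p`. -/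
def hsumLt (p n N : ℕ) : ℚ :=
  ∑ l ∈ (Fintype.piFinset fun _ : Fin n => Finset.Ico 1 p) |>.filter
      (fun l => ∑ i, l i = N),
    ∏ i, (1 : ℚ) / l i


open Finset

/-- `x` lies in `p^k ℤ_(p)`. -/
def ZK (p k : ℕ) (x : ℚ) : Prop := ∃ z : ℚ, x = (p : ℚ) ^ k * z ∧ ¬ (p ∣ z.den)

namespace ZK

variable {p : ℕ}

lemma add (hp : p.Prime) {k : ℕ} {x y : ℚ} (hx : ZK p k x) (hy : ZK p k y) : ZK p k (x + y) := by
  obtain ⟨a, rfl, ha⟩ := hx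
  obtain ⟨b, rfl, hb⟩ := hy
  refine ⟨a + b, by ring, fun h => ?_⟩
  rcases (hp.dvd_mul).1 (h.trans (Rat.add_den_dvd a b)) with h | h
  · exact ha h
  · exact hb h

lemma mul (hp : p.Prime) {k l : ℕ} {x y : ℚ} (hx : ZK p k x) (hy : ZK p l y) :
    ZK p (k + l) (x * y) := by
  obtain ⟨a, rfl, ha⟩ := hx
  obtain ⟨b, rfl, hb⟩ := hy
  refine ⟨a * b, by ring, fun h => ?_⟩
  rcases (hp.dvd_mul).1 (h.trans (Rat.mul_den_dvd a b)) with h | h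
  · exact ha h
  · exact hb h

lemma int (hp : p.Prime) (z : ℤ) : ZK p 0 (z : ℚ) :=
  ⟨z, by simp, by simpa using hp.one_lt.ne'⟩

lemma nat (hp : p.Prime) (z : ℕ) : ZK p 0 (z : ℚ) := by simpa using int hp z

lemma one (hp : p.Prime) : ZK p 0 1 := by simpa using int hp 1

lemma zero (hp : p.Prime) (k : ℕ) : ZK p k 0 :=
  ⟨0, by simp, by simpa using hp.one_lt.ne'⟩

lemma neg {k : ℕ} {x : ℚ} (hx : ZK p k x) : ZK p k (-x) := by
  obtain ⟨a, rfl, ha⟩ := hx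
  exact ⟨-a, by ring, by simpa using ha⟩

lemma sub (hp : p.Prime) {k : ℕ} {x y : ℚ} (hx : ZK p k x) (hy : ZK p k y) : ZK p k (x - y) := by
  rw [sub_eq_add_neg]; exact add hp hx hy.neg

lemma mul0 (hp : p.Prime) {k : ℕ} {x y : ℚ} (hx : ZK p k x) (hy : ZK p 0 y) :
    ZK p k (x * y) := mul hp hx hy

lemma mul0' (hp : p.Prime) {k : ℕ} {x y : ℚ} (hx : ZK p 0 x) (hy : ZK p k y) :
    ZK p k (x * y) := by simpa using mul hp hx hy

lemma ppow (hp : p.Prime) (k : ℕ) : ZK p k ((p : ℚ) ^ k) :=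
  ⟨1, by simp, by simpa using hp.one_lt.ne'⟩

lemma mono (hp : p.Prime) {k l : ℕ} (h : l ≤ k) {x : ℚ} (hx : ZK p k x) : ZK p l x := by
  obtain ⟨d, rfl⟩ := Nat.exists_eq_add_of_le h
  obtain ⟨a, rfl, ha⟩ := hx
  have h1 : ZK p 0 ((p : ℚ) ^ d) := by
    have := nat hp (p ^ d)
    push_cast at this
    exact this
  have h2 : ZK p 0 a := ⟨a, by simp, ha⟩
  rw [pow_add, mul_assoc]
  exact mul0 hp (ppow hp l) (mul0 hp h1 h2)

lemma sum (hp : p.Prime) {ι : Type*} {k : ℕ} (s : Finset ι) (f : ι → ℚ)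
    (h : ∀ i ∈ s, ZK p k (f i)) : ZK p k (∑ i ∈ s, f i) := by
  classical
  induction s using Finset.induction_on with
  | empty => simpa using zero hp k
  | insert a s ha ih =>
    rw [Finset.sum_insert ha]
    exact add hp (h a (by simp)) (ih fun i hi => h i (by simp [hi]))

lemma prod (hp : p.Prime) {ι : Type*} (s : Finset ι) (f : ι → ℚ)
    (h : ∀ i ∈ s, ZK p 0 (f i)) : ZK p 0 (∏ i ∈ s, f i) := by
  classical
  induction s using Finset.induction_on with
  | empty => simpa using one hp
  | insert a s ha ih =>
    rw [Finset.prod_insert ha]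
    exact mul0 hp (h a (by simp)) (ih fun i hi => h i (by simp [hi]))

lemma pow (hp : p.Prime) {x : ℚ} (hx : ZK p 0 x) (n : ℕ) : ZK p 0 (x ^ n) := by
  simpa using prod hp (Finset.range n) (fun _ => x) (fun _ _ => hx)

lemma inv (hp : p.Prime) {i : ℕ} (hi : ¬ p ∣ i) : ZK p 0 ((i : ℚ)⁻¹) := by
  refine ⟨(i : ℚ)⁻¹, by simp, ?_⟩
  rw [Rat.inv_natCast_den_of_pos]
  · exact hi
  · rcases Nat.eq_zero_or_pos i with h | h
    · simp [h] at hi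
    · exact h

/-- divide by a power of p -/
lemma of_pmul (hp : p.Prime) {k l : ℕ} {x : ℚ} (hx : ZK p (k + l) ((p : ℚ) ^ k * x)) :
    ZK p l x := by
  obtain ⟨z, h, hz⟩ := hx
  have hp0 : (p : ℚ) ^ k ≠ 0 := pow_ne_zero _ (by exact_mod_cast hp.ne_zero)
  refine ⟨z, ?_, hz⟩
  apply mul_left_cancel₀ hp0
  rw [h]; ring

lemma of_natmul (hp : p.Prime) {k i : ℕ} (hi : ¬ p ∣ i) {x : ℚ} (hx : ZK p k ((i : ℚ) * x)) :
    ZK p k x := by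
  have hi0 : (i : ℚ) ≠ 0 := by
    rintro h
    have : i = 0 := by exact_mod_cast h
    simp [this] at hi
  have := mul0' hp (inv hp hi) hx
  rwa [inv_mul_cancel_left₀ hi0] at this

lemma of_dvd (hp : p.Prime) {k : ℕ} {z : ℤ} (h : (p : ℤ) ^ k ∣ z) : ZK p k (z : ℚ) := by
  obtain ⟨w, rfl⟩ := h
  have := mul0 hp (ppow hp k) (int hp w)
  push_cast
  exact this

lemma prod_sub (hp : p.Prime) {ι : Type*} {k : ℕ} (s : Finset ι) (f g : ι → ℚ)
    (hf : ∀ i ∈ s, ZK p 0 (f i)) (hg : ∀ i ∈ s, ZK p 0 (g i))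
    (h : ∀ i ∈ s, ZK p k (f i - g i)) : ZK p k (∏ i ∈ s, f i - ∏ i ∈ s, g i) := by
  classical
  induction s using Finset.induction_on with
  | empty => simpa using zero hp k
  | insert a s ha ih =>
    rw [Finset.prod_insert ha, Finset.prod_insert ha]
    have e : f a * ∏ i ∈ s, f i - g a * ∏ i ∈ s, g i =
      f a * (∏ i ∈ s, f i - ∏ i ∈ s, g i) + (f a - g a) * ∏ i ∈ s, g i := by ring
    rw [e]
    refine add hp (mul0' hp (hf a (by simp)) (ih ?_ ?_ ?_)) (mul0 hp (h a (by simp)) (prod hp _ _ ?_))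
    all_goals intro i hi
    · exact hf i (by simp [hi])
    · exact hg i (by simp [hi])
    · exact h i (by simp [hi])
    · exact hg i (by simp [hi])

end ZK

lemma bernoulli_ZK {p : ℕ} (hp : p.Prime) (s : ℕ) (hs : s + 1 < p) : ZK p 0 (bernoulli' s) := by
  induction s using Nat.strong_induction_on with
  | _ s ih =>
    rw [bernoulli'_def]
    refine ZK.sub hp (ZK.one hp) (ZK.sum hp _ _ fun k hk => ?_)
    have hk' : k < s := by simpa using hk
    refine ZK.mul0 hp ?_ (ih k hk' (by omega))
    rw [div_eq_mul_inv]
    refine ZK.mul0 hp (ZK.nat hp _) ?_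
    have e : (s : ℚ) - k + 1 = ((s - k + 1 : ℕ) : ℚ) := by
      push_cast [Nat.cast_sub hk'.le]; ring
    rw [e]
    exact ZK.inv hp (Nat.not_dvd_of_pos_of_lt (by omega) (by omega))

lemma bern_ZK {p : ℕ} (hp : p.Prime) (s : ℕ) (hs : s + 1 < p) : ZK p 0 (bernoulli s) := by
  rw [bernoulli]
  refine ZK.mul0 hp ?_ (bernoulli_ZK hp s hs)
  have := ZK.int hp ((-1) ^ s)
  push_cast at this
  exact this

/-- power sums mod p^2 -/
lemma powsum {p : ℕ} (hp : p.Prime) (s : ℕ) (hs0 : 1 ≤ s) (hs : s + 1 < p) :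
    ZK p 2 (∑ i ∈ Ico 1 p, (i : ℚ) ^ s - p * bernoulli s) := by
  have h1 : ∑ i ∈ Ico 1 p, (i : ℚ) ^ s = ∑ i ∈ range p, (i : ℚ) ^ s := by
    rw [Finset.range_eq_Ico, Finset.sum_eq_sum_Ico_succ_bot hp.pos]
    simp [show s ≠ 0 by omega]
  rw [h1, sum_range_pow, Finset.sum_range_succ]
  have hs' : (s : ℚ) + 1 ≠ 0 := by positivity
  have e : bernoulli s * ((s + 1).choose s : ℕ) * (p : ℚ) ^ (s + 1 - s) / (s + 1) = p * bernoulli s := by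
    have : s + 1 - s = 1 := by omega
    rw [this]
    simp
    field_simp
  rw [e, add_sub_cancel_right]
  refine ZK.sum hp _ _ fun i hi => ?_
  have hi' : i < s := by simpa using hi
  rw [div_eq_mul_inv]
  have := ZK.inv hp (i := s + 1) (Nat.not_dvd_of_pos_of_lt (by omega) (by omega))
  push_cast at this
  refine ZK.mul0 hp (ZK.mul0' hp (ZK.mul0 hp (bern_ZK hp i (by omega)) (ZK.nat hp _)) ?_) this
  exact ZK.mono hp (by omega) (ZK.ppow hp (s + 1 - i))

lemma binom_two (v : ℤ) (n : ℕ) : ∃ c : ℤ, (1 + v) ^ n = 1 + n * v + v ^ 2 * c := by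
  induction n with
  | zero => exact ⟨0, by simp⟩
  | succ n ih =>
    obtain ⟨c, hc⟩ := ih
    exact ⟨n + c * (1 + v), by rw [pow_succ, hc]; push_cast; ring⟩

/-- Teichmüller power sums vanish mod p^2 -/
lemma teich {p : ℕ} (hp : p.Prime) (s : ℕ) (hs0 : 1 ≤ s) (hs : s + 1 < p) :
    (p : ℤ) ^ 2 ∣ ∑ i ∈ Ico 1 p, (i : ℤ) ^ (p * s) := by
  have := Fact.mk hp
  obtain ⟨g, hg⟩ := IsCyclic.exists_generator (α := (ZMod p)ˣ)
  have hord : orderOf g = p - 1 := by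
    rw [orderOf_eq_card_of_forall_mem_zpowers hg, Nat.card_eq_fintype_card, ZMod.card_units]
  set a : ℕ := (g : ZMod p).val with ha
  have hag : ((a : ℕ) : ZMod p) = g := by rw [ha, ZMod.natCast_val, ZMod.cast_id]
  -- Σ over units
  have hval : ∀ x : (ZMod p)ˣ, (((x : ZMod p).val : ℤ) : ZMod p) = x := by
    intro x; simp
  have e1 : ∑ i ∈ Ico 1 p, (i : ℤ) ^ (p * s) =
      ∑ x : (ZMod p)ˣ, (((x : ZMod p).val : ℕ) : ℤ) ^ (p * s) := by
    symm
    refine Finset.sum_bij (fun x _ => (x : ZMod p).val) ?_ ?_ ?_ ?_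
    · intro x _
      simp only [mem_Ico]
      refine ⟨?_, ZMod.val_lt _⟩
      rw [Nat.one_le_iff_ne_zero, Ne, ZMod.val_eq_zero]
      exact x.ne_zero
    · intro x _ y _ h
      exact Units.ext (ZMod.val_injective p h)
    · intro i hi
      simp only [mem_Ico] at hi
      have hi0 : (i : ZMod p) ≠ 0 := by
        rw [Ne, ZMod.natCast_eq_zero_iff]
        exact Nat.not_dvd_of_pos_of_lt (by omega) hi.2
      refine ⟨Units.mk0 _ hi0, mem_univ _, ?_⟩
      simp [ZMod.val_cast_of_lt hi.2]
    · intros; rfl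
  have key : (p : ℤ) ^ 2 ∣ ((a : ℤ) ^ (p * s) - 1) * ∑ i ∈ Ico 1 p, (i : ℤ) ^ (p * s) := by
    rw [e1, sub_mul, one_mul]
    have e2 : ∑ x : (ZMod p)ˣ, (((x : ZMod p).val : ℕ) : ℤ) ^ (p * s) =
      ∑ x : (ZMod p)ˣ, ((((g * x : (ZMod p)ˣ) : ZMod p).val : ℕ) : ℤ) ^ (p * s) := by
      exact (Equiv.sum_comp (Equiv.mulLeft g)
        (fun x : (ZMod p)ˣ => (((x : ZMod p).val : ℕ) : ℤ) ^ (p * s))).symm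
    conv => rhs; rhs; rw [e2]
    rw [Finset.mul_sum, ← Finset.sum_sub_distrib]
    refine Finset.dvd_sum fun x _ => ?_
    rw [← mul_pow, pow_mul, pow_mul]
    refine dvd_trans ?_ (sub_dvd_pow_sub_pow _ _ _)
    have hd : (p : ℤ) ∣ (a : ℤ) * ((x : ZMod p).val : ℕ) - (((g * x : (ZMod p)ˣ) : ZMod p).val : ℕ) := by
      rw [← ZMod.intCast_zmod_eq_zero_iff_dvd]
      push_cast
      rw [hag]
      simp
    have := dvd_sub_pow_of_dvd_sub (R := ℤ) (p := p) hd 1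
    simpa using this
  have hp' : Prime (p : ℤ) := Nat.prime_iff_prime_int.1 hp
  refine (IsCoprime.dvd_of_dvd_mul_left ?_ key)
  refine IsCoprime.pow_left ?_
  rw [Prime.coprime_iff_not_dvd hp']
  intro h
  rw [← ZMod.intCast_zmod_eq_zero_iff_dvd] at h
  push_cast at h
  rw [hag, pow_mul, ZMod.pow_card, sub_eq_zero] at h
  have h' : g ^ s = 1 := Units.ext (by simpa using h)
  have := orderOf_dvd_of_pow_eq_one h'
  rw [hord] at this
  have := Nat.le_of_dvd (by omega) this
  omega

/-- negative power sums mod p^2 -/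
lemma negpow {p : ℕ} (hp : p.Prime) (k : ℕ) (hk0 : 1 ≤ k) (hk : k + 2 < p) :
    ZK p 2 (∑ i ∈ Ico 1 p, ((i : ℚ)⁻¹) ^ k - p * k / (k + 1) * bernoulli (p - 1 - k)) := by
  set s := p - 1 - k with hs
  have hps : p = s + k + 1 := by omega
  have hA := powsum hp s (by omega) (by omega)
  have hT : ZK p 2 (∑ i ∈ Ico 1 p, (i : ℚ) ^ (p * s)) := by
    have := ZK.of_dvd hp (teich hp s (by omega) (by omega))
    push_cast at this
    exact this
  have hlin : ZK p 2 (∑ i ∈ Ico 1 p, ((s : ℚ) * ((i : ℚ)⁻¹) ^ k + (i : ℚ) ^ (p * s) - (s + 1) * (i : ℚ) ^ s)) := by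
    refine ZK.sum hp _ _ fun i hi => ?_
    simp only [mem_Ico] at hi
    have hi0 : (i : ℚ) ≠ 0 := by
      have : i ≠ 0 := by omega
      exact_mod_cast this
    have hnd : ¬ p ∣ i := Nat.not_dvd_of_pos_of_lt (by omega) (by omega)
    have hfermat : (p : ℤ) ∣ (i : ℤ) ^ (p - 1) - 1 := by
      have := Int.ModEq.pow_card_sub_one_eq_one hp (n := (i : ℤ)) (by
        rw [isCoprime_comm, Prime.coprime_iff_not_dvd (Nat.prime_iff_prime_int.1 hp)]
        exact_mod_cast hnd)
      exact this.symm.dvd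
    obtain ⟨w, hw⟩ := hfermat
    obtain ⟨c, hc⟩ := binom_two ((i : ℤ) ^ (p - 1) - 1) (s + 1)
    have hd : (p : ℤ) ^ 2 ∣ (s : ℤ) + ((i : ℤ) ^ (p - 1)) ^ (s + 1) - (s + 1) * (i : ℤ) ^ (p - 1) := by
      refine ⟨w ^ 2 * c, ?_⟩
      have : (i : ℤ) ^ (p - 1) = 1 + ((i : ℤ) ^ (p - 1) - 1) := by ring
      conv => lhs; rw [this, hc, hw]
      push_cast; ring
    have hz := ZK.mul0 hp (ZK.of_dvd hp hd) (ZK.pow hp (ZK.inv hp hnd) k)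
    convert hz using 1
    push_cast
    have e1 : (i : ℚ) ^ (p * s) = ((i : ℚ) ^ (p - 1)) ^ (s + 1) * ((i : ℚ)⁻¹) ^ k := by
      rw [← pow_mul, inv_pow, eq_mul_inv_iff_mul_eq₀ (pow_ne_zero _ hi0), ← pow_add]
      congr 1
      have q1 : p - 1 = s + k := by omega
      have q2 : p * s = (s + k + 1) * s := by rw [← hps]
      rw [q1, q2]; ring
    have e2 : (i : ℚ) ^ s = (i : ℚ) ^ (p - 1) * ((i : ℚ)⁻¹) ^ k := by
      rw [inv_pow, eq_mul_inv_iff_mul_eq₀ (pow_ne_zero _ hi0), ← pow_add]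
      congr 1; omega
    rw [e1, e2]; ring
  rw [Finset.sum_sub_distrib, Finset.sum_add_distrib, ← Finset.mul_sum, ← Finset.mul_sum] at hlin
  set H := ∑ i ∈ Ico 1 p, ((i : ℚ)⁻¹) ^ k
  set A := ∑ i ∈ Ico 1 p, (i : ℚ) ^ s
  set W := ∑ i ∈ Ico 1 p, (i : ℚ) ^ (p * s)
  -- s H ≡ (s+1) A ≡ (s+1) p B
  have h1 : ZK p 2 (s * H - (s + 1) * (p * bernoulli s)) := by
    have := ZK.add hp (ZK.sub hp hlin hT) (ZK.mul0' hp (ZK.nat hp (s + 1)) hA)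
    convert this using 1
    push_cast; ring
  -- replace s by -(k+1)
  have hB : ZK p 0 (bernoulli s) := bern_ZK hp s (by omega)
  have hp1 : ZK p 1 (p : ℚ) := by simpa using ZK.ppow hp 1
  have hH0 : ZK p 0 H := ZK.sum hp _ _ fun i hi => by
    simp only [mem_Ico] at hi
    exact ZK.pow hp (ZK.inv hp (Nat.not_dvd_of_pos_of_lt (by omega) (by omega))) k
  have hH : ZK p 1 H := by
    refine ZK.of_natmul hp (i := s) (Nat.not_dvd_of_pos_of_lt (by omega) (by omega)) ?_
    have := ZK.add hp (ZK.mono hp (show 1 ≤ 2 by norm_num) h1)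
      (ZK.mul0' hp (ZK.nat hp (s + 1)) (ZK.mul0 hp hp1 hB))
    convert this using 1
    push_cast; ring
  refine ZK.of_natmul hp (i := k + 1) (Nat.not_dvd_of_pos_of_lt (by omega) (by omega)) ?_
  have hpH : ZK p 2 (p * H) := ZK.mul hp hp1 hH
  have hppB : ZK p 2 (p * (p * bernoulli s)) := ZK.mul hp hp1 (ZK.mul0 hp hp1 hB)
  have := ZK.add hp (ZK.sub hp hpH h1) hppB.neg
  convert this using 1
  have hpq : (p : ℚ) = s + k + 1 := by exact_mod_cast hps
  have : (k : ℚ) + 1 ≠ 0 := by positivity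
  have e : ((k + 1 : ℕ) : ℚ) * (H - p * k / (k + 1) * bernoulli s) = (k + 1) * H - p * k * bernoulli s := by
    push_cast; field_simp
  rw [e]
  have hsq : (s : ℚ) = p - k - 1 := by rw [hpq]; ring
  rw [hsq]; ring

/-- elementary symmetric sums of 1/i -/
def EE (p k : ℕ) : ℚ := ∑ t ∈ powersetCard k (Ico 1 p), ∏ i ∈ t, (i : ℚ)⁻¹

lemma newton (s : Finset ℕ) (f : ℕ → ℚ) (k : ℕ) :
    (k : ℚ) * ∑ t ∈ powersetCard k s, ∏ i ∈ t, f i =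
      (-1) ^ (k + 1) * ∑ a ∈ antidiagonal k with a.1 < k,
        (-1) ^ a.1 * (∑ t ∈ powersetCard a.1 s, ∏ i ∈ t, f i) * ∑ i ∈ s, f i ^ a.2 := by
  have h := congrArg (MvPolynomial.aeval (fun x : {x // x ∈ s} => f x))
    (MvPolynomial.mul_esymm_eq_sum {x // x ∈ s} ℚ k)
  have e1 : ∀ m, MvPolynomial.aeval (fun x : {x // x ∈ s} => f x)
      (MvPolynomial.esymm {x // x ∈ s} ℚ m) = ∑ t ∈ powersetCard m s, ∏ i ∈ t, f i := by
    intro m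
    rw [MvPolynomial.aeval_esymm_eq_multiset_esymm, ← Finset.esymm_map_val]
    congr 1
    have : (fun x : {x // x ∈ s} => f x) = f ∘ Subtype.val := rfl
    rw [this, ← Multiset.map_map]
    congr 1
    exact Multiset.attach_map_val s.val
  have e2 : ∀ m, MvPolynomial.aeval (fun x : {x // x ∈ s} => f x)
      (MvPolynomial.psum {x // x ∈ s} ℚ m) = ∑ i ∈ s, f i ^ m := by
    intro m
    rw [MvPolynomial.psum]
    simp only [map_sum, map_pow, MvPolynomial.aeval_X]
    exact Finset.sum_coe_sort s (fun i => f i ^ m)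
  simpa only [map_mul, map_sum, map_pow, map_neg, map_one, map_natCast, e1, e2] using h

lemma EE_ZK0 {p : ℕ} (hp : p.Prime) (k : ℕ) : ZK p 0 (EE p k) := by
  refine ZK.sum hp _ _ fun t ht => ZK.prod hp _ _ fun i hi => ?_
  have := (mem_powersetCard.1 ht).1 hi
  simp only [mem_Ico] at this
  exact ZK.inv hp (Nat.not_dvd_of_pos_of_lt (by omega) (by omega))

lemma EE_zero (p : ℕ) : EE p 0 = 1 := by simp [EE]

lemma sgn_ZK {p : ℕ} (hp : p.Prime) (a : ℕ) : ZK p 0 ((-1 : ℚ) ^ a) := by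
  have := ZK.int hp ((-1) ^ a)
  push_cast at this
  exact this

lemma H_ZK1 {p : ℕ} (hp : p.Prime) (k : ℕ) (hk0 : 1 ≤ k) (hk : k + 2 < p) :
    ZK p 1 (∑ i ∈ Ico 1 p, ((i : ℚ)⁻¹) ^ k) := by
  have h := ZK.mono hp (show 1 ≤ 2 by norm_num) (negpow hp k hk0 hk)
  have hp1 : ZK p 1 (p : ℚ) := by simpa using ZK.ppow hp 1
  have hi := ZK.inv hp (i := k + 1) (Nat.not_dvd_of_pos_of_lt (by omega) (by omega))
  have := ZK.add hp h (ZK.mul0 hp (ZK.mul0 hp (ZK.mul0 hp hp1 (ZK.nat hp k)) hi)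
    (bern_ZK hp (p - 1 - k) (by omega)))
  convert this using 1
  push_cast; ring

lemma EE_newton {p : ℕ} (hp : p.Prime) (k : ℕ) (hk0 : 1 ≤ k) (hk : k + 2 < p) :
    ZK p 1 (EE p k) ∧
    ZK p 2 ((k : ℚ) * EE p k - (-1) ^ (k + 1) * ∑ i ∈ Ico 1 p, ((i : ℚ)⁻¹) ^ k) := by
  induction k using Nat.strong_induction_on with
  | _ k ih =>
    have hN := newton (Ico 1 p) (fun i => (i : ℚ)⁻¹) k
    have h2 : ZK p 2 ((k : ℚ) * EE p k - (-1) ^ (k + 1) * ∑ i ∈ Ico 1 p, ((i : ℚ)⁻¹) ^ k) := by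
      rw [EE, hN, ← mul_sub]
      refine ZK.mul0' hp (sgn_ZK hp _) ?_
      have hmem : ((0, k) : ℕ × ℕ) ∈ (antidiagonal k).filter (fun a => a.1 < k) := by
        simp; omega
      rw [← Finset.add_sum_erase _ _ hmem]
      simp only [powersetCard_zero, sum_singleton, prod_empty, pow_zero, one_mul, add_sub_cancel_left]
      refine ZK.sum hp _ _ fun a ha => ?_
      simp only [mem_erase, mem_filter, Finset.HasAntidiagonal.mem_antidiagonal, ne_eq] at ha
      obtain ⟨ha1, ha2, ha3⟩ := ha
      have ha0 : 1 ≤ a.1 := by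
        by_contra hcon
        apply ha1
        ext <;> simp <;> omega
      have h1 := (ih a.1 ha3 ha0 (by omega)).1
      exact ZK.mul hp (k := 1) (l := 1) (ZK.mul0' hp (sgn_ZK hp _) h1)
        (H_ZK1 hp a.2 (by omega) (by omega))
    refine ⟨?_, h2⟩
    refine ZK.of_natmul hp (i := k) (Nat.not_dvd_of_pos_of_lt (by omega) (by omega)) ?_
    have := ZK.add hp (ZK.mono hp (show 1 ≤ 2 by norm_num) h2)
      (ZK.mul0' hp (sgn_ZK hp (k + 1)) (H_ZK1 hp k hk0 hk))
    rwa [sub_add_cancel] at this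

/-- coefficients of the polynomial `j ↦ binom (p j) p` -/
def bb (p m : ℕ) : ℚ := (-(p : ℚ)) ^ (m - 1) * EE p (m - 1)

lemma bb_one (p : ℕ) : bb p 1 = 1 := by simp [bb, EE_zero]

lemma bb_ZK0 {p : ℕ} (hp : p.Prime) (m : ℕ) : ZK p 0 (bb p m) := by
  refine ZK.mul0 hp (ZK.pow hp (ZK.neg (ZK.nat hp p)) _) (EE_ZK0 hp _)

lemma negp_ZK {p : ℕ} (hp : p.Prime) (k : ℕ) : ZK p k ((-(p : ℚ)) ^ k) := by
  rw [neg_pow]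
  exact ZK.mul0' hp (sgn_ZK hp k) (ZK.ppow hp k)

lemma bb_bern {p : ℕ} (hp : p.Prime) (m : ℕ) (hm : 2 ≤ m) (hmp : m + 1 < p) :
    ZK p (m + 1) (bb p m - (p : ℚ) ^ m * (-(bernoulli (p - m) / m))) := by
  obtain ⟨k, rfl⟩ : ∃ k, m = k + 1 := ⟨m - 1, by omega⟩
  have h1 := (EE_newton hp k (by omega) (by omega)).2
  have h2 := negpow hp k (by omega) (by omega)
  have h3 := ZK.add hp h1 (ZK.mul0' hp (sgn_ZK hp (k + 1)) h2)
  have h4 : ZK p 2 (EE p k - (-1) ^ (k + 1) * (p / (k + 1) * bernoulli (p - 1 - k))) := by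
    refine ZK.of_natmul hp (i := k) (Nat.not_dvd_of_pos_of_lt (by omega) (by omega)) ?_
    convert h3 using 1
    ring
  have h5 := ZK.mul hp (negp_ZK hp k) h4
  have e : p - (k + 1) = p - 1 - k := by omega
  rw [e]
  convert h5 using 1
  simp only [bb, Nat.add_sub_cancel]
  rw [mul_sub]
  congr 1
  have hs : (-1 : ℚ) ^ k * (-1) ^ (k + 1) = -1 := by
    rw [← pow_add, show k + (k + 1) = 2 * k + 1 by ring, pow_succ, pow_mul]; simp
  calc (p : ℚ) ^ (k + 1) * -(bernoulli (p - 1 - k) / ((k + 1 : ℕ) : ℚ))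
      = ((-1 : ℚ) ^ k * (-1) ^ (k + 1)) * (p : ℚ) ^ (k + 1) * (bernoulli (p - 1 - k) / (k + 1)) := by
        rw [hs]; push_cast; ring
    _ = _ := by rw [neg_pow (p : ℚ) k]; ring

lemma bb_ZK {p : ℕ} (hp : p.Prime) (m : ℕ) (hm : 2 ≤ m) (hmp : m + 1 < p) : ZK p m (bb p m) := by
  have h := EE_newton hp (m - 1) (by omega) (by omega)
  have := ZK.mul hp (negp_ZK hp (m - 1)) h.1
  rwa [show m - 1 + 1 = m by omega] at this

/-- the polynomial `binom (p j) p` -/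
def GG (p : ℕ) (j : ℚ) : ℚ := j * ∏ i ∈ Ico 1 p, (1 - p * j * (i : ℚ)⁻¹)

lemma GG_expand {p : ℕ} (hp : p.Prime) (j : ℚ) :
    GG p j = ∑ m ∈ Ico 1 (p + 1), bb p m * j ^ m := by
  have h : ∏ i ∈ Ico 1 p, (1 - p * j * (i : ℚ)⁻¹) =
      ∑ k ∈ range p, (-(p : ℚ)) ^ k * EE p k * j ^ k := by
    have e : ∀ i : ℕ, (1 - p * j * (i : ℚ)⁻¹) = 1 + (-(p : ℚ) * j) * (i : ℚ)⁻¹ := by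
      intro i; ring
    simp_rw [e]
    rw [Finset.prod_one_add, Finset.sum_powerset]
    simp only [Nat.card_Ico, Nat.sub_add_cancel hp.one_le]
    refine Finset.sum_congr rfl fun k _ => ?_
    rw [EE, Finset.mul_sum, Finset.sum_mul]
    refine Finset.sum_congr rfl fun t ht => ?_
    rw [Finset.prod_mul_distrib, Finset.prod_const, (mem_powersetCard.1 ht).2, mul_pow]
    ring
  rw [GG, h, Finset.mul_sum, Finset.sum_Ico_eq_sum_range]
  simp only [Nat.add_sub_cancel]
  refine Finset.sum_congr rfl fun k _ => ?_
  rw [bb, add_comm 1 k, Nat.add_sub_cancel, pow_succ]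
  ring

lemma GG_approx {p n : ℕ} (hp : p.Prime) (hn : Even n) (hn4 : 4 ≤ n) (hpn : n + 2 < p) (j : ℤ) :
    ZK p (n + 1) (GG p j - ∑ m ∈ Ico 1 n, bb p m * (j : ℚ) ^ m) := by
  rw [GG_expand hp, ← Finset.sum_Ico_consecutive _ (show 1 ≤ n by omega) (show n ≤ p + 1 by omega),
    add_sub_cancel_left]
  refine ZK.sum hp _ _ fun m hm => ?_
  simp only [mem_Ico] at hm
  refine ZK.mul0 hp ?_ (ZK.pow hp (ZK.int hp j) m)
  rcases eq_or_lt_of_le hm.1 with h | h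
  · subst h
    have := bb_bern hp n (by omega) (by omega)
    rw [bernoulli_eq_zero_of_odd] at this
    · simpa using this
    · have := hp.odd_of_ne_two (by omega)
      exact Nat.Odd.sub_even (by omega) this hn
    · omega
  · rcases eq_or_lt_of_le (Nat.succ_le_of_lt h) with h' | h'
    · rw [← h']
      exact bb_ZK hp _ (by omega) (by omega)
    · refine ZK.mono hp (show n + 1 ≤ m - 1 by omega) ?_
      exact ZK.mul0 hp (negp_ZK hp _) (EE_ZK0 hp _)

lemma GG_ZK0 {p : ℕ} (hp : p.Prime) (j : ℤ) : ZK p 0 (GG p j) := by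
  rw [GG_expand hp]
  exact ZK.sum hp _ _ fun m _ => ZK.mul0 hp (bb_ZK0 hp m) (ZK.pow hp (ZK.int hp j) m)

lemma GG_choose {p : ℕ} (hp : p.Prime) (h2 : p ≠ 2) (j : ℕ) :
    ((p * j).choose p : ℚ) = GG p j := by
  have hpf : ((p.factorial : ℕ) : ℚ) ≠ 0 := by exact_mod_cast p.factorial_ne_zero
  rw [Nat.choose_eq_descFactorial_div_factorial, Nat.cast_div (Nat.factorial_dvd_descFactorial _ _) hpf,
    div_eq_iff hpf]
  have hd : ((p * j).descFactorial p : ℚ) = ∏ i ∈ range p, ((p : ℚ) * j - i) := by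
    rw [← descPochhammer_eval_eq_prod_range, ← descPochhammer_eval_eq_descFactorial ℚ]
    push_cast
    rfl
  rw [hd, Finset.range_eq_Ico, Finset.prod_eq_prod_Ico_succ_bot hp.pos]
  have hf : ((p.factorial : ℕ) : ℚ) = p * ∏ i ∈ Ico 1 p, (i : ℚ) := by
    obtain ⟨q, rfl⟩ : ∃ q, p = q + 1 := ⟨p - 1, by have := hp.pos; omega⟩
    rw [Nat.factorial_succ, ← Finset.prod_Ico_id_eq_factorial]
    push_cast; rfl
  rw [hf, GG]
  have e : ∏ i ∈ Ico 1 p, ((p : ℚ) * j - i) =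
      (∏ i ∈ Ico 1 p, (1 - p * j * (i : ℚ)⁻¹)) * ∏ i ∈ Ico 1 p, (i : ℚ) := by
    have hsg : ∏ i ∈ Ico 1 p, (-1 : ℚ) = 1 := by
      rw [Finset.prod_const, Nat.card_Ico]
      exact (hp.even_sub_one h2).neg_one_pow
    rw [← mul_one (∏ i ∈ Ico 1 p, ((p : ℚ) * j - i)), ← Finset.prod_mul_distrib]
    conv_lhs => rw [← hsg]
    rw [← Finset.prod_mul_distrib]
    refine Finset.prod_congr rfl fun i hi => ?_
    have : (i : ℚ) ≠ 0 := by
      simp only [mem_Ico] at hi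
      have : i ≠ 0 := by omega
      exact_mod_cast this
    field_simp
    ring
  rw [zero_add, e]
  simp; ring

/-- alternating binomial sum -/
def TT (n : ℕ) (φ : ℚ → ℚ) : ℚ := ∑ j ∈ range (n + 1), (-1 : ℚ) ^ j * (n.choose j : ℚ) * φ j

lemma TT_fwd {n : ℕ} (hn : Even n) (φ : ℚ → ℚ) : TT n φ = (fwdDiff 1)^[n] φ 0 := by
  rw [fwdDiff_iter_eq_sum_shift, TT]
  refine Finset.sum_congr rfl fun j hj => ?_
  have hj' : j ≤ n := by simp only [mem_range] at hj; omega
  have : (-1 : ℚ) ^ (n - j) = (-1) ^ j := by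
    have h1 : (-1 : ℚ) ^ (n - j) * (-1) ^ j = 1 := by
      rw [← pow_add, Nat.sub_add_cancel hj']; exact hn.neg_one_pow
    have h2 : (-1 : ℚ) ^ j * (-1) ^ j = 1 := by
      rw [← pow_add]; exact (Even.add_self j).neg_one_pow
    have h3 : (-1 : ℚ) ^ j ≠ 0 := pow_ne_zero _ (by norm_num)
    exact mul_right_cancel₀ h3 (h1.trans h2.symm)
  simp [this]

lemma TT_lt {n : ℕ} (hn : Even n) (P : Polynomial ℚ) (hP : P.natDegree < n) :
    TT n (fun j => P.eval j) = 0 := by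
  rw [TT_fwd hn]
  exact congrFun (Polynomial.fwdDiff_iter_eq_zero_of_degree_lt hP) 0

lemma TT_monic {n : ℕ} (hn : Even n) (P : Polynomial ℚ) (hP : P.natDegree = n) (hm : P.Monic) :
    TT n (fun j => P.eval j) = n.factorial := by
  rw [TT_fwd hn]
  have := congrFun (Polynomial.fwdDiff_iter_degree_eq_factorial P) 0
  rw [hP, hm.leadingCoeff] at this
  simpa using this

lemma TT_sum {ι : Type*} (n : ℕ) (s : Finset ι) (c : ι → ℚ) (φ : ι → ℚ → ℚ) :
    TT n (fun j => ∑ i ∈ s, c i * φ i j) = ∑ i ∈ s, c i * TT n (φ i) := by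
  simp only [TT, Finset.mul_sum]
  rw [Finset.sum_comm]
  refine Finset.sum_congr rfl fun i _ => Finset.sum_congr rfl fun j _ => by ring

lemma TT_ZK {p : ℕ} (hp : p.Prime) (n k : ℕ) (φ ψ : ℚ → ℚ)
    (h : ∀ j : ℕ, ZK p k (φ j - ψ j)) : ZK p k (TT n φ - TT n ψ) := by
  rw [TT, TT, ← Finset.sum_sub_distrib]
  refine ZK.sum hp _ _ fun j _ => ?_
  rw [← mul_sub]
  exact ZK.mul0' hp (ZK.mul0 hp (sgn_ZK hp j) (ZK.nat hp _)) (h j)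

lemma TT_int {p : ℕ} (hp : p.Prime) (n : ℕ) (φ : ℚ → ℚ)
    (h : ∀ j : ℕ, ZK p 0 (φ j)) : ZK p 0 (TT n φ) := by
  refine ZK.sum hp _ _ fun j _ => ?_
  exact ZK.mul0' hp (ZK.mul0 hp (sgn_ZK hp j) (ZK.nat hp _)) (h j)

open Polynomial in
lemma TT_mixed {n : ℕ} (hn : Even n) (a b : ℕ) :
    (a + b < n → TT n (fun j => j ^ a * (j - 1) ^ b) = 0) ∧
    (a + b = n → TT n (fun j => j ^ a * (j - 1) ^ b) = n.factorial) := by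
  have hm : (X ^ a * (X - C 1) ^ b : ℚ[X]).Monic :=
    (monic_X_pow a).mul ((monic_X_sub_C 1).pow b)
  have hd : (X ^ a * (X - C 1) ^ b : ℚ[X]).natDegree = a + b := by
    rw [(monic_X_pow a).natDegree_mul ((monic_X_sub_C 1).pow b), natDegree_X_pow,
      (monic_X_sub_C 1).natDegree_pow, natDegree_X_sub_C, mul_one]
  have he : (fun j : ℚ => j ^ a * (j - 1) ^ b) = fun j => (X ^ a * (X - C 1) ^ b : ℚ[X]).eval j := by
    ext j; simp
  rw [he]
  exact ⟨fun h => TT_lt hn _ (by omega), fun h => TT_monic hn _ (by omega) hm⟩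

lemma TT_pow {n : ℕ} (hn : Even n) (a : ℕ) :
    (a < n → TT n (fun j => j ^ a) = 0) ∧ (a = n → TT n (fun j => j ^ a) = n.factorial) := by
  have := TT_mixed hn a 0
  simpa using this

/-- truncated polynomial -/
def gt (p n : ℕ) (j : ℚ) : ℚ := ∑ m ∈ Ico 1 n, bb p m * j ^ m

lemma gt_ZK0 {p : ℕ} (hp : p.Prime) (n : ℕ) (j : ℤ) : ZK p 0 (gt p n j) :=
  ZK.sum hp _ _ fun m _ => ZK.mul0 hp (bb_ZK0 hp m) (ZK.pow hp (ZK.int hp j) m)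

lemma core_D {p n : ℕ} (hp : p.Prime) (hn : Even n) (hn4 : 4 ≤ n) (hpn : n + 2 < p) :
    ZK p (n + 1) (TT n (fun j => GG p j * GG p (j - 1)) -
      n.factorial * ∑ m ∈ Ico 1 n, bb p m * bb p (n - m)) := by
  have h1 : ZK p (n + 1) (TT n (fun j => GG p j * GG p (j - 1)) -
      TT n (fun j => gt p n j * gt p n (j - 1))) := by
    refine TT_ZK hp _ _ _ _ fun j => ?_
    have a1 := GG_approx hp hn hn4 hpn j
    have a2 := GG_approx hp hn hn4 hpn ((j : ℤ) - 1)
    have b1 := GG_ZK0 hp j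
    have b2 := gt_ZK0 hp n ((j : ℤ) - 1)
    push_cast at a1 a2 b1 b2
    have := ZK.add hp (ZK.mul0' hp b1 a2) (ZK.mul0 hp a1 b2)
    convert this using 1
    simp only [gt]
    ring
  have h2 : TT n (fun j => gt p n j * gt p n (j - 1)) =
      ∑ x ∈ Ico 1 n ×ˢ Ico 1 n, (bb p x.1 * bb p x.2) * TT n (fun j => j ^ x.1 * (j - 1) ^ x.2) := by
    rw [← TT_sum]
    congr 1
    ext j
    rw [gt, gt, Finset.sum_mul_sum, Finset.sum_product]
    refine Finset.sum_congr rfl fun a _ => Finset.sum_congr rfl fun b _ => by ring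
  have h3 : (n.factorial : ℚ) * ∑ m ∈ Ico 1 n, bb p m * bb p (n - m) =
      ∑ x ∈ Ico 1 n ×ˢ Ico 1 n, if x.1 + x.2 = n then (bb p x.1 * bb p x.2) * n.factorial else 0 := by
    rw [Finset.sum_product, Finset.mul_sum]
    refine Finset.sum_congr rfl fun a ha => ?_
    simp only [mem_Ico] at ha
    rw [Finset.sum_eq_single (n - a)]
    · simp [show a + (n - a) = n by omega]; ring
    · intro b _ hb
      rw [if_neg]
      dsimp only
      omega
    · intro h
      simp only [mem_Ico] at h
      omega
  have h4 : ZK p (n + 1) (TT n (fun j => gt p n j * gt p n (j - 1)) -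
      n.factorial * ∑ m ∈ Ico 1 n, bb p m * bb p (n - m)) := by
    rw [h2, h3, ← Finset.sum_sub_distrib]
    refine ZK.sum hp _ _ fun x hx => ?_
    simp only [mem_product, mem_Ico] at hx
    obtain ⟨⟨ha1, ha2⟩, hb1, hb2⟩ := hx
    rcases lt_trichotomy (x.1 + x.2) n with h | h | h
    · rw [(TT_mixed hn x.1 x.2).1 h, if_neg (by omega)]
      simpa using ZK.zero hp _
    · rw [(TT_mixed hn x.1 x.2).2 h, if_pos h, sub_self]
      exact ZK.zero hp _
    · rw [if_neg (by omega), sub_zero]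
      refine ZK.mul0 hp ?_ (TT_int hp _ _ fun j => ?_)
      · exact ZK.mono hp (show n + 1 ≤ x.1 + x.2 by omega)
          (ZK.mul hp (bb_ZK hp _ (by omega) (by omega)) (bb_ZK hp _ (by omega) (by omega)))
      · have := ZK.int hp ((j : ℤ) - 1)
        push_cast at this
        exact ZK.mul0 hp (ZK.pow hp (ZK.nat hp j) _) (ZK.pow hp this _)
  have := ZK.add hp h1 h4
  rwa [sub_add_sub_cancel] at this

lemma core_U {p n : ℕ} (hp : p.Prime) (hn : Even n) (hn4 : 4 ≤ n) (hpn : n + 2 < p) :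
    ZK p (n + 1) (TT n (fun j => (n - j) * GG p j) - (-(n.factorial * bb p (n - 1)))) := by
  have h1 : ZK p (n + 1) (TT n (fun j => (n - j) * GG p j) -
      TT n (fun j => (n - j) * gt p n j)) := by
    refine TT_ZK hp _ _ _ _ fun j => ?_
    have a1 := GG_approx hp hn hn4 hpn j
    have b1 := ZK.int hp ((n : ℤ) - j)
    push_cast at a1 b1
    rw [← mul_sub]
    exact ZK.mul0' hp b1 a1
  have h2 : TT n (fun j => (n - j) * gt p n j) =
      ∑ m ∈ Ico 1 n, bb p m * (n * TT n (fun j => j ^ m) - TT n (fun j => j ^ (m + 1))) := by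
    have : (fun j => ((n : ℚ) - j) * gt p n j) =
        fun j => ∑ m ∈ Ico 1 n, bb p m * ((n - j) * j ^ m) := by
      ext j
      rw [gt, Finset.mul_sum]
      exact Finset.sum_congr rfl fun m _ => by ring
    rw [this, TT_sum]
    refine Finset.sum_congr rfl fun m _ => ?_
    congr 1
    simp only [TT, Finset.mul_sum]
    rw [← Finset.sum_sub_distrib]
    exact Finset.sum_congr rfl fun j _ => by ring
  have h3 : TT n (fun j => (n - j) * gt p n j) = -(n.factorial * bb p (n - 1)) := by
    rw [h2, Finset.sum_eq_single (n - 1)]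
    · rw [(TT_pow hn (n - 1)).1 (by omega), (TT_pow hn (n - 1 + 1)).2 (by omega)]
      ring
    · intro m hm hne
      simp only [mem_Ico] at hm
      rw [(TT_pow hn m).1 (by omega), (TT_pow hn (m + 1)).1 (by omega)]
      ring
    · intro h
      simp only [mem_Ico] at h
      omega
  rwa [h3] at h1

open Polynomial in
lemma hsum_coeff (p n N : ℕ) (w : ℕ → ℚ) :
    ∑ l ∈ (Fintype.piFinset fun _ : Fin n => Finset.Ico 1 p).filter (fun l => ∑ i, l i = N),
      ∏ i, w (l i) = ((∑ l ∈ Ico 1 p, C (w l) * X ^ l : ℚ[X]) ^ n).coeff N := by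
  have h : (∑ l ∈ Ico 1 p, C (w l) * X ^ l : ℚ[X]) ^ n =
      ∏ _i : Fin n, ∑ l ∈ Ico 1 p, C (w l) * X ^ l := by simp
  rw [h, Finset.prod_univ_sum, finsetSum_coeff, Finset.sum_filter]
  refine Finset.sum_congr rfl fun l _ => ?_
  rw [Finset.prod_mul_distrib, Finset.prod_pow_eq_pow_sum, ← map_prod, coeff_C_mul, coeff_X_pow]
  by_cases h : ∑ i, l i = N
  · simp [h]
  · simp [h, Ne.symm h]

/-- weights congruent to 1/l -/
def ww (p l : ℕ) : ℚ := -((-1) ^ l * (p.choose l : ℚ)) / p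

lemma choose_mod_s11 {p : ℕ} (hp : p.Prime) (k : ℕ) (hk : k < p) :
    (p : ℤ) ∣ ((p - 1).choose k : ℤ) - (-1) ^ k := by
  induction k with
  | zero => simp
  | succ k ih =>
    have h1 := ih (by omega)
    have h2 : p.choose (k + 1) = (p - 1).choose k + (p - 1).choose (k + 1) := by
      conv_lhs => rw [show p = (p - 1) + 1 by omega]
      rw [Nat.choose_succ_succ]
    have h3 : (p : ℤ) ∣ (p.choose (k + 1) : ℕ) := by
      exact_mod_cast hp.dvd_choose_self (by omega) hk
    rw [h2] at h3
    push_cast at h3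
    have := dvd_sub h3 h1
    have e : ((p - 1).choose (k + 1) : ℤ) - (-1) ^ (k + 1) =
        (((p - 1).choose k : ℤ) + ((p - 1).choose (k + 1) : ℤ)) - (((p - 1).choose k : ℤ) - (-1) ^ k) := by
      rw [pow_succ]; ring
    rw [e]
    exact this

lemma ww_eq {p : ℕ} (hp : p.Prime) {l : ℕ} (hl : l ∈ Ico 1 p) :
    ww p l = -((-1) ^ l * ((p - 1).choose (l - 1) : ℚ)) * (l : ℚ)⁻¹ := by
  simp only [mem_Ico] at hl
  have h : p * (p - 1).choose (l - 1) = p.choose l * l := by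
    have := Nat.add_one_mul_choose_eq (p - 1) (l - 1)
    rwa [Nat.sub_add_cancel hp.one_le, Nat.sub_add_cancel hl.1] at this
  have h' : (p : ℚ) * (p - 1).choose (l - 1) = p.choose l * l := by exact_mod_cast h
  have hp0 : (p : ℚ) ≠ 0 := by exact_mod_cast hp.ne_zero
  have hl0 : (l : ℚ) ≠ 0 := by
    have : l ≠ 0 := by omega
    exact_mod_cast this
  rw [ww]
  field_simp
  linear_combination h'

lemma ww_ZK {p : ℕ} (hp : p.Prime) {l : ℕ} (hl : l ∈ Ico 1 p) :
    ZK p 0 (ww p l) ∧ ZK p 0 (1 / (l : ℚ)) ∧ ZK p 1 (1 / (l : ℚ) - ww p l) := by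
  have hl' := hl
  simp only [mem_Ico] at hl'
  have hi := ZK.inv hp (i := l) (Nat.not_dvd_of_pos_of_lt (by omega) (by omega))
  have h3 : ZK p 1 (1 / (l : ℚ) - ww p l) := by
    rw [ww_eq hp hl]
    have hd := ZK.of_dvd hp (k := 1) (by simpa using choose_mod_s11 hp (l - 1) (by omega))
    push_cast at hd
    have := ZK.mul0 hp (ZK.mul0' hp (sgn_ZK hp l) hd) hi
    convert this using 1
    have hs : (-1 : ℚ) ^ l * (-1) ^ (l - 1) = -1 := by
      obtain ⟨k, rfl⟩ : ∃ k, l = k + 1 := ⟨l - 1, by omega⟩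
      rw [← pow_add, Nat.add_sub_cancel, show k + 1 + k = 2 * k + 1 by ring, pow_succ, pow_mul]
      simp
    rw [one_div]
    linear_combination (l : ℚ)⁻¹ * hs
  have h2 : ZK p 0 (1 / (l : ℚ)) := by simpa using hi
  refine ⟨?_, h2, h3⟩
  have := ZK.sub hp h2 (ZK.mono hp (Nat.zero_le 1) h3)
  rwa [sub_sub_cancel] at this

/-- the modified sum -/
def hW (p n N : ℕ) : ℚ :=
  ∑ l ∈ (Fintype.piFinset fun _ : Fin n => Finset.Ico 1 p).filter (fun l => ∑ i, l i = N),
      ∏ i, ww p (l i)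

lemma hW_cong {p : ℕ} (hp : p.Prime) (n N : ℕ) : ZK p 1 (hsumLt p n N - hW p n N) := by
  rw [hsumLt, hW, ← Finset.sum_sub_distrib]
  refine ZK.sum hp _ _ fun l hl => ?_
  have hl' : ∀ i, l i ∈ Ico 1 p := Fintype.mem_piFinset.1 (mem_filter.1 hl).1
  exact ZK.prod_sub hp _ _ _ (fun i _ => (ww_ZK hp (hl' i)).2.1) (fun i _ => (ww_ZK hp (hl' i)).1)
    (fun i _ => (ww_ZK hp (hl' i)).2.2)

lemma hW_ZK0 {p : ℕ} (hp : p.Prime) (n N : ℕ) : ZK p 0 (hW p n N) := by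
  refine ZK.sum hp _ _ fun l hl => ?_
  have hl' : ∀ i, l i ∈ Ico 1 p := Fintype.mem_piFinset.1 (mem_filter.1 hl).1
  exact ZK.prod hp _ _ (fun i _ => (ww_ZK hp (hl' i)).1)

open Polynomial in
lemma coeff_one_sub_pow (N m : ℕ) : ((1 - X : ℚ[X]) ^ N).coeff m = (-1) ^ m * (N.choose m : ℚ) := by
  have h : (1 - X : ℚ[X]) ^ N = ∑ k ∈ range (N + 1), C ((-1) ^ k * (N.choose k : ℚ)) * X ^ k := by
    rw [sub_eq_add_neg, add_comm, add_pow]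
    refine Finset.sum_congr rfl fun k _ => ?_
    rw [neg_pow]
    simp only [map_mul, map_pow, map_neg, map_one, map_natCast, one_pow, mul_one]
    ring
  rw [h, finsetSum_coeff]
  simp only [coeff_C_mul, coeff_X_pow, mul_ite, mul_one, mul_zero, Finset.sum_ite_eq, mem_range]
  split_ifs with h
  · rfl
  · rw [Nat.choose_eq_zero_of_lt (by omega)]; simp

open Polynomial in
lemma ww_poly {p : ℕ} (hp : p.Prime) (h2 : p ≠ 2) :
    C (p : ℚ) * (∑ l ∈ Ico 1 p, C (ww p l) * X ^ l : ℚ[X]) = (1 - X ^ p) + -(1 - X) ^ p := by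
  have hp0 : (p : ℚ) ≠ 0 := by exact_mod_cast hp.ne_zero
  have hpp := hp.two_le
  ext m
  rw [coeff_C_mul, finsetSum_coeff]
  simp only [coeff_C_mul, coeff_X_pow, coeff_add, coeff_sub, coeff_neg, coeff_one_sub_pow, coeff_one]
  simp only [mul_ite, mul_one, mul_zero, Finset.sum_ite_eq, mem_Ico]
  rcases Nat.eq_zero_or_pos m with h | h
  · subst h
    simp [hp.ne_zero.symm]
  · rcases lt_trichotomy m p with h' | h' | h'
    · rw [if_pos ⟨h, h'⟩, if_neg (by omega), if_neg (by omega), ww]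
      field_simp; ring
    · subst h'
      rw [if_neg (by omega), if_neg (by omega), if_pos rfl]
      simp [(hp.odd_of_ne_two h2).neg_one_pow]
    · rw [if_neg (by omega), if_neg (by omega), if_neg (by omega), Nat.choose_eq_zero_of_lt h']
      simp

lemma one_sub_three {R : Type*} [CommRing R] (y : R) (k : ℕ) :
    ∃ r : R, (1 - y) ^ k = 1 - k * y + (k.choose 2 : ℕ) * y ^ 2 + y ^ 3 * r := by
  induction k with
  | zero => exact ⟨0, by simp⟩
  | succ k ih =>
    obtain ⟨r, hr⟩ := ih
    refine ⟨r * (1 - y) - (k.choose 2 : ℕ), ?_⟩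
    rw [pow_succ, hr, show (k + 1).choose 2 = k + k.choose 2 by
      rw [Nat.choose_succ_succ]; simp]
    push_cast
    ring

open Polynomial in
lemma coeff_mix {p : ℕ} (hp : p.Prime) (h2 : p ≠ 2) (j k : ℕ) :
    ((((1 - X) ^ p) ^ j * (1 - X ^ p) ^ k : ℚ[X])).coeff (2 * p) =
      ((p * j).choose (2 * p) : ℚ) + k * ((p * j).choose p : ℚ) + (k.choose 2 : ℚ) := by
  obtain ⟨r, hr⟩ := one_sub_three (X ^ p : ℚ[X]) k
  have hpp := hp.pos
  rw [hr, ← pow_mul]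
  have e : ((1 - X) ^ (p * j) * (1 - (k : ℚ[X]) * X ^ p + ((k.choose 2 : ℕ) : ℚ[X]) * (X ^ p) ^ 2 + (X ^ p) ^ 3 * r) : ℚ[X]) =
      (1 - X) ^ (p * j) - C (k : ℚ) * ((1 - X) ^ (p * j) * X ^ p)
       + C (k.choose 2 : ℚ) * ((1 - X) ^ (p * j) * X ^ (2 * p)) + ((1 - X) ^ (p * j) * r) * X ^ (3 * p) := by
    simp only [map_natCast]
    ring
  rw [e]
  simp only [coeff_add, coeff_sub, coeff_C_mul, coeff_mul_X_pow']
  rw [if_pos (by omega), if_pos (by omega), if_neg (by omega)]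
  simp only [coeff_one_sub_pow]
  rw [show 2 * p - p = p by omega, Nat.sub_self, (hp.odd_of_ne_two h2).neg_one_pow,
    (even_two_mul p).neg_one_pow]
  simp

open Polynomial in
lemma hW_eq {p : ℕ} (hp : p.Prime) (h2 : p ≠ 2) (n : ℕ) :
    (p : ℚ) ^ n * hW p n (2 * p) = ∑ j ∈ range (n + 1), (-1 : ℚ) ^ j * (n.choose j : ℚ) *
      (((p * j).choose (2 * p) : ℚ) + (n - j : ℕ) * ((p * j).choose p : ℚ) + ((n - j).choose 2 : ℚ)) := by
  rw [hW, hsum_coeff, ← coeff_C_mul, map_pow, ← mul_pow, ww_poly hp h2, add_comm, add_pow,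
    finsetSum_coeff]
  refine Finset.sum_congr rfl fun j _ => ?_
  rw [← coeff_mix hp h2, neg_pow ((1 - X) ^ p : ℚ[X])]
  have e : ((-1) ^ j * ((1 - X) ^ p) ^ j * (1 - X ^ p) ^ (n - j) * ((n.choose j : ℕ) : ℚ[X]) : ℚ[X]) =
    C ((-1 : ℚ) ^ j * (n.choose j : ℚ)) * (((1 - X) ^ p) ^ j * (1 - X ^ p) ^ (n - j)) := by
    simp only [map_mul, map_pow, map_neg, map_one, map_natCast]
    ring
  rw [e, coeff_C_mul]

lemma choose_two_p {p : ℕ} (hp : p.Prime) (h2 : p ≠ 2) (j : ℕ) :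
    GG p 2 * ((p * j).choose (2 * p) : ℚ) = GG p j * GG p (j - 1) := by
  have h22 := GG_choose hp h2 2
  push_cast at h22
  rw [← h22, ← GG_choose hp h2 j]
  rcases Nat.eq_zero_or_pos j with h | h
  · subst h
    rw [mul_zero, Nat.choose_eq_zero_of_lt hp.pos,
      Nat.choose_eq_zero_of_lt (show 0 < 2 * p by have := hp.pos; omega)]
    simp
  · have e : (j : ℚ) - 1 = ((j - 1 : ℕ) : ℚ) := by push_cast [Nat.cast_sub h]; ring
    rw [e, ← GG_choose hp h2 (j - 1)]
    rcases Nat.lt_or_ge j 2 with h' | h'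
    · have : j = 1 := by omega
      subst this
      rw [Nat.choose_eq_zero_of_lt (show p * 1 < 2 * p by have := hp.pos; omega)]
      simp [Nat.choose_eq_zero_of_lt hp.pos]
    · have := Nat.choose_mul (n := p * j) (k := 2 * p) (s := p) (by omega)
      rw [show p * j - p = p * (j - 1) by rw [Nat.mul_sub_one], show 2 * p - p = p by omega] at this
      rw [mul_comm p 2, mul_comm]
      exact_mod_cast this

open Polynomial in
lemma TT_choose2 {n : ℕ} (hn : Even n) (hn4 : 4 ≤ n) :
    TT n (fun j => (n - j) * (n - j - 1) / 2) = 0 := by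
  have h := TT_lt hn (C (1 / 2 : ℚ) * ((C (n : ℚ) - X) * (C (n - 1 : ℚ) - X))) (by
    have : (C (1 / 2 : ℚ) * ((C (n : ℚ) - X) * (C (n - 1 : ℚ) - X))).natDegree ≤ 2 := by
      compute_degree
    omega)
  rw [← h]
  congr 1
  ext j
  simp
  ring

lemma main_cong {p n : ℕ} (hp : p.Prime) (hn : Even n) (hn4 : 4 ≤ n) (hpn : n + 2 < p) :
    ZK p 1 (2 * hW p n (2 * p) -
      n.factorial * ∑ m ∈ Ico 2 (n - 1), (bernoulli (p - m) / m) * (bernoulli (p - (n - m)) / (n - m : ℕ))) := by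
  have h2 : p ≠ 2 := by omega
  set c := hW p n (2 * p) with hc
  have hc0 : ZK p 0 c := hW_ZK0 hp _ _
  have e1 : GG p 2 * ((p : ℚ) ^ n * c) = TT n (fun j => GG p j * GG p (j - 1)) +
      GG p 2 * TT n (fun j => (n - j) * GG p j) := by
    have e0 : (p : ℚ) ^ n * c = (p : ℚ) ^ n * c - TT n (fun j => (n - j) * (n - j - 1) / 2) := by
      rw [TT_choose2 hn hn4, sub_zero]
    rw [e0, hc, hW_eq hp h2]
    simp only [TT]
    rw [← Finset.sum_sub_distrib, Finset.mul_sum, Finset.mul_sum, ← Finset.sum_add_distrib]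
    refine Finset.sum_congr rfl fun j hj => ?_
    have hj' : j ≤ n := by simp only [mem_range] at hj; omega
    rw [← choose_two_p hp h2, ← GG_choose hp h2 j, Nat.cast_choose_two, Nat.cast_sub hj']
    ring
  have hD := core_D hp hn hn4 hpn
  have hU := core_U hp hn hn4 hpn
  have hC : ZK p 2 (GG p 2 - 2) := by
    have := ZK.mono hp (show 2 ≤ n + 1 by omega) (GG_approx hp hn hn4 hpn 2)
    rw [Finset.sum_eq_sum_Ico_succ_bot (by omega : 1 < n), bb_one] at this
    have h3 : ZK p 2 (∑ m ∈ Ico (1 + 1) n, bb p m * ((2 : ℤ) : ℚ) ^ m) :=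
      ZK.sum hp _ _ fun m hm => by
        simp only [mem_Ico] at hm
        exact ZK.mul0 hp (ZK.mono hp (by omega) (bb_ZK hp m (by omega) (by omega)))
          (ZK.pow hp (ZK.int hp 2) m)
    have := ZK.add hp this h3
    convert this using 1
    push_cast
    ring
  have hb1 : ZK p (n - 1) (bb p (n - 1)) := bb_ZK hp _ (by omega) (by omega)
  have hC0 : ZK p 0 (GG p 2) := by
    have := GG_ZK0 hp 2
    push_cast at this
    exact this
  -- sum splitting
  have e2 : ∑ m ∈ Ico 1 n, bb p m * bb p (n - m) =
      2 * bb p (n - 1) + ∑ m ∈ Ico 2 (n - 1), bb p m * bb p (n - m) := by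
    rw [Finset.sum_eq_sum_Ico_succ_bot (by omega : 1 < n)]
    obtain ⟨q, rfl⟩ : ∃ q, n = q + 1 := ⟨n - 1, by omega⟩
    rw [Finset.sum_Ico_succ_top (by omega)]
    simp only [Nat.add_sub_cancel, bb_one, show q + 1 - q = 1 by omega]
    ring
  set S := ∑ m ∈ Ico 2 (n - 1), bb p m * bb p (n - m) with hS
  set S' := ∑ m ∈ Ico 2 (n - 1), (bernoulli (p - m) / m) * (bernoulli (p - (n - m)) / (n - m : ℕ)) with hS'
  have hSS : ZK p (n + 1) (S - (p : ℚ) ^ n * S') := by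
    rw [hS, hS', Finset.mul_sum, ← Finset.sum_sub_distrib]
    refine ZK.sum hp _ _ fun m hm => ?_
    simp only [mem_Ico] at hm
    have a1 := bb_bern hp m (by omega) (by omega)
    have a2 := bb_bern hp (n - m) (by omega) (by omega)
    have b1 := bb_ZK hp (n - m) (by omega) (by omega)
    have b2 : ZK p m ((p : ℚ) ^ m * (-(bernoulli (p - m) / m))) := by
      rw [div_eq_mul_inv]
      exact ZK.mul0 hp (ZK.ppow hp m) (ZK.neg (ZK.mul0 hp (bern_ZK hp _ (by omega))
        (ZK.inv hp (Nat.not_dvd_of_pos_of_lt (by omega) (by omega)))))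
    have c1 := ZK.mul hp a1 b1
    have c2 := ZK.mul hp b2 a2
    rw [show m + 1 + (n - m) = n + 1 by omega] at c1
    rw [show m + (n - m + 1) = n + 1 by omega] at c2
    have := ZK.add hp c1 c2
    convert this using 1
    have hpw : (p : ℚ) ^ n = (p : ℚ) ^ m * (p : ℚ) ^ (n - m) := by
      rw [← pow_add]; congr 1; omega
    rw [hpw]; ring
  rw [e2] at hD
  -- combine
  refine ZK.of_pmul hp (k := n) ?_
  have t1 : ZK p (n + 1) ((GG p 2 - 2) * (n.factorial * bb p (n - 1))) := by
    have := ZK.mul hp hC (ZK.mul0' hp (ZK.nat hp n.factorial) hb1)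
    rwa [show 2 + (n - 1) = n + 1 by omega] at this
  have t2 : ZK p (n + 1) ((GG p 2 - 2) * ((p : ℚ) ^ n * c)) := by
    have := ZK.mul hp hC (ZK.mul0 hp (ZK.ppow hp n) hc0)
    exact ZK.mono hp (by omega) this
  have t3 := ZK.mul0' hp hC0 hU
  have t4 := ZK.mul0' hp (ZK.nat hp n.factorial) hSS
  have := ZK.sub hp (ZK.add hp (ZK.add hp hD t3) t4) (ZK.add hp t1 t2)
  convert this using 1
  linear_combination e1

theorem stmt_11 (p n : ℕ) (hn : Even n) (hp : p.Prime) (hpn : n + 2 < p) :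
    ratCong p 1 (hsumLt p n (2 * p))
      ((Nat.factorial n : ℚ) / 2 *
        ∑ a ∈ (Finset.Icc 2 (n - 2)).filter (fun a => Odd a),
          bernoulli (p - a) * bernoulli (p - n + a) / ((a : ℚ) * (n - a))) := by
  change ZK p 1 _
  rcases Nat.lt_or_ge n 4 with h4 | h4
  · have hn' : n = 0 ∨ n = 2 := by
      obtain ⟨k, rfl⟩ := hn
      omega
    have h0 : hsumLt p n (2 * p) = 0 := by
      rw [hsumLt, Finset.sum_eq_zero]
      intro l hl
      exfalso
      rw [mem_filter, Fintype.mem_piFinset] at hl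
      obtain ⟨h1, h2⟩ := hl
      rcases hn' with rfl | rfl
      · simp at h2; omega
      · rw [Fin.sum_univ_two] at h2
        have := mem_Ico.1 (h1 0)
        have := mem_Ico.1 (h1 1)
        omega
    have hI : Finset.Icc 2 (n - 2) = ∅ := by
      rw [Finset.Icc_eq_empty_iff]; omega
    rw [h0, hI]
    simpa using ZK.zero hp 1
  · have e : ∑ a ∈ (Finset.Icc 2 (n - 2)).filter (fun a => Odd a),
          bernoulli (p - a) * bernoulli (p - n + a) / ((a : ℚ) * (n - a)) =
        ∑ m ∈ Ico 2 (n - 1), (bernoulli (p - m) / m) * (bernoulli (p - (n - m)) / (n - m : ℕ)) := by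
      rw [Finset.sum_filter]
      have hI : Finset.Icc 2 (n - 2) = Ico 2 (n - 1) := by
        ext x; simp only [mem_Icc, mem_Ico]; omega
      rw [hI]
      refine Finset.sum_congr rfl fun m hm => ?_
      simp only [mem_Ico] at hm
      split_ifs with ho
      · rw [show p - n + m = p - (n - m) by omega, Nat.cast_sub (show m ≤ n by omega)]
        rw [div_mul_div_comm]
      · have : bernoulli (p - m) = 0 := by
          refine bernoulli_eq_zero_of_odd ?_ (by omega)
          exact Nat.Odd.sub_even (by omega) (hp.odd_of_ne_two (by omega)) (Nat.not_odd_iff_even.1 ho)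
        rw [this]; simp
    rw [e]
    have hm := main_cong hp hn h4 hpn
    have hh := hW_cong hp n (2 * p)
    refine ZK.of_natmul hp (i := 2) (Nat.not_dvd_of_pos_of_lt (by omega) (by omega)) ?_
    have := ZK.add hp hm (ZK.mul0' hp (ZK.nat hp 2) hh)
    convert this using 1
    push_cast
    ring
end
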